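/- Let w = Σ_{l=0}^{3} w^l be a graded form on ℝ³ whose components lie in H¹_loc, and assume that ∫[⟨δw,δφ⟩ + ⟨dw,dφ⟩ − ω²ε₀μ₀⟨w,φ⟩]dx + ⟨Q̃(γ,μ,ω)w,φ⟩ = 0 for every graded form φ = Σ_{l=0}^{3} φ^l with smooth compactly supported components, where dw and δw are taken degreewise using the weak derivatives of w. Then the graded form v := P(γ,μ,ω)w, defined almost everywhere from the weak derivatives of w, is a weak solution of P(γ,μ,ω)^t v = 0 on ℝ³, and moreover every component of every v^l belongs to H¹_loc. -/

import Mathlib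

noncomputable section

open MeasureTheory Finset

namespace EMPaper

abbrev Pt (n : ℕ) := Fin n → ℝ
abbrev GF (n : ℕ) := Finset (Fin n) → ℂ
abbrev Form (n : ℕ) := Pt n → GF n

variable {n : ℕ}

def msgn (I J : Finset (Fin n)) : ℂ :=
  (-1 : ℂ) ^ (((I ×ˢ J).filter fun p => p.2 < p.1).card)

def wedge (u v : GF n) : GF n := fun S =>
  ∑ I ∈ S.powerset, msgn I (S \ I) * u I * v (S \ I)

def vee (v u : GF n) : GF n := fun I =>
  ∑ J ∈ (univ \ I).powerset, msgn I J * v J * u (I ∪ J)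

def ginner (u v : GF n) : ℂ := ∑ S : Finset (Fin n), u S * v S

def gconj (u : GF n) : GF n := fun S => (starRingEnd ℂ) (u S)

def proj (l : ℕ) (u : GF n) : GF n := fun S => if S.card = l then u S else 0

def IsGrade (l : ℕ) (u : GF n) : Prop := ∀ S : Finset (Fin n), S.card ≠ l → u S = 0

def dxe (j : Fin n) : GF n := fun S => if S = {j} then 1 else 0

def oneG (c : Fin n → ℂ) : GF n := fun S => ∑ j, if S = {j} then c j else 0

def altSign (u : GF n) : GF n := fun S => (-1 : ℂ) ^ S.card * u S

def gd (D : Fin n → GF n) : GF n := fun S => ∑ j, wedge (dxe j) (D j) S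

def gdel (D : Fin n → GF n) : GF n := fun S =>
  (-1 : ℂ) ^ (S.card + 1) * ∑ j, vee (dxe j) (D j) S

def pd (j : Fin n) (f : Pt n → ℂ) : Pt n → ℂ := fun x => fderiv ℝ f x (Pi.single j 1)

def Dcl (φ : Form n) : Fin n → Form n := fun j x S => pd j (fun y => φ y S) x

def IsTest (φ : Pt n → ℂ) : Prop := ContDiff ℝ (⊤ : ℕ∞) φ ∧ HasCompactSupport φ

def TestForm (φ : Form n) : Prop := ∀ S : Finset (Fin n), IsTest fun x => φ x S

def L2loc (f : Pt n → ℂ) : Prop :=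
  AEStronglyMeasurable f (volume : Measure (Pt n)) ∧
    ∀ K : Set (Pt n), IsCompact K → IntegrableOn (fun x => ‖f x‖ ^ 2) K volume

def HasWeakPD (j : Fin n) (f g : Pt n → ℂ) : Prop :=
  ∀ φ : Pt n → ℂ, IsTest φ → ∫ x, g x * φ x = -∫ x, f x * pd j φ x

def H1locWith (w : Form n) (Dw : Fin n → Form n) : Prop :=
  (∀ S : Finset (Fin n), L2loc fun x => w x S) ∧
    (∀ (j : Fin n) (S : Finset (Fin n)),
      HasWeakPD j (fun x => w x S) fun x => Dw j x S) ∧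
    ∀ (j : Fin n) (S : Finset (Fin n)), L2loc fun x => Dw j x S

/-! The three-dimensional electromagnetic setting. -/

/-- The data of the medium: frequency `ω`, constants `ε₀, μ₀` and `C¹` coefficients
`ε, σ, μ` with `ε ≥ ε₀ > 0`, `μ ≥ μ₀ > 0`, `σ ≥ 0`. -/
structure Coeffs where
  ω : ℝ
  ε₀ : ℝ
  μ₀ : ℝ
  εf : Pt 3 → ℝ
  σf : Pt 3 → ℝ
  μf : Pt 3 → ℝ
  hω : 0 < ω
  hε₀ : 0 < ε₀
  hμ₀ : 0 < μ₀
  hεC1 : ContDiff ℝ 1 εf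
  hσC1 : ContDiff ℝ 1 σf
  hμC1 : ContDiff ℝ 1 μf
  hεge : ∀ x, ε₀ ≤ εf x
  hμge : ∀ x, μ₀ ≤ μf x
  hσge : ∀ x, 0 ≤ σf x

namespace Coeffs

variable (C : Coeffs)

/-- `γ = ε + iσ/ω`. -/
def γ : Pt 3 → ℂ := fun x => (C.εf x : ℂ) + Complex.I * (C.σf x : ℂ) / (C.ω : ℂ)

/-- `a = (1/2) Log γ`. -/
def a : Pt 3 → ℂ := fun x => (1 / 2 : ℂ) * Complex.log (C.γ x)

/-- `b = (1/2) Log μ`. -/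
def b : Pt 3 → ℂ := fun x => (1 / 2 : ℂ) * Complex.log ((C.μf x : ℂ))

/-- `γ^{1/2} = e^a`. -/
def sg : Pt 3 → ℂ := fun x => Complex.exp (C.a x)

/-- `μ^{1/2} = e^b`. -/
def sm : Pt 3 → ℂ := fun x => Complex.exp (C.b x)

/-- The one-form `da`. -/
def da : Form 3 := fun x => oneG fun j => pd j C.a x

/-- The one-form `db`. -/
def db : Form 3 := fun x => oneG fun j => pd j C.b x

/-- The one-form `d(γ^{1/2} μ^{1/2})`. -/
def dsgm : Form 3 := fun x => oneG fun j => pd j (fun y => C.sg y * C.sm y) x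

/-- The zeroth order coefficient `iω γ^{1/2} μ^{1/2}`. -/
def c0 : Pt 3 → ℂ := fun x => Complex.I * (C.ω : ℂ) * C.sg x * C.sm x

end Coeffs

/-- The zeroth order part of `P(γ,μ,ω)` at a point, given the values `A = da`, `B = db`
and `c = iωγ^{1/2}μ^{1/2}` there:
`da∧v¹ + da∨(v¹+v³) + db∧(v⁰+v²) − db∨v² + iωγ^{1/2}μ^{1/2} v`. -/
def P0 (A B : GF 3) (c : ℂ) (v : GF 3) : GF 3 :=
  wedge A (proj 1 v) + vee A (proj 1 v + proj 3 v) + wedge B (proj 0 v + proj 2 v)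
    - vee B (proj 2 v) + c • v

/-- The zeroth order part of `P(γ,μ,ω)^t` at a point:
`db∧v¹ + db∨(v¹+v³) + da∧(v⁰+v²) − da∨v² + iωγ^{1/2}μ^{1/2} v`. -/
def P0t (A B : GF 3) (c : ℂ) (v : GF 3) : GF 3 :=
  wedge B (proj 1 v) + vee B (proj 1 v + proj 3 v) + wedge A (proj 0 v + proj 2 v)
    - vee A (proj 2 v) + c • v

/-- `P(γ,μ,ω)v` at a point, computed from the partial derivatives `D j = ∂_j v`. -/
def Pfull (A B : GF 3) (c : ℂ) (D : Fin 3 → GF 3) (v : GF 3) : GF 3 :=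
  (gd fun j => altSign (D j)) + (gdel fun j => altSign (D j)) + P0 A B c v

/-- `P(γ,μ,ω)^t v` at a point, computed from the partial derivatives `D j = ∂_j v`. -/
def Ptfull (A B : GF 3) (c : ℂ) (D : Fin 3 → GF 3) (v : GF 3) : GF 3 :=
  -((gd fun j => altSign (D j)) + (gdel fun j => altSign (D j))) + P0t A B c v

/-- `v` is a weak solution of `P(γ,μ,ω)v = 0` on `ℝ³`. -/
def IsWeakSolP (C : Coeffs) (v : Form 3) : Prop :=
  ∀ φ : Form 3, TestForm φ →
    (∫ x, ginner (altSign (v x))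
        ((gd fun j => Dcl φ j x) + gdel fun j => Dcl φ j x))
      + (∫ x, ginner (P0 (C.da x) (C.db x) (C.c0 x) (v x)) (φ x)) = 0

/-- `v` is a weak solution of `P(γ,μ,ω)^t v = 0` on `ℝ³`. -/
def IsWeakSolPt (C : Coeffs) (v : Form 3) : Prop :=
  ∀ φ : Form 3, TestForm φ →
    (∫ x, ginner (-altSign (v x))
        ((gd fun j => Dcl φ j x) + gdel fun j => Dcl φ j x))
      + (∫ x, ginner (P0t (C.da x) (C.db x) (C.c0 x) (v x)) (φ x)) = 0

/-- The components of the Hodge star of the 2-form part: `∗(dx²∧dx³) = dx¹`,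
`∗(dx³∧dx¹) = dx²`, `∗(dx¹∧dx²) = dx³`. -/
def star2 (u : GF 3) : Fin 3 → ℂ := fun k =>
  if k = 0 then u {1, 2} else if k = 1 then -u {0, 2} else u {0, 1}

/-- `⟨c, D*(u⊙v)⟩` for 1-forms with components `u, v` and partial derivatives
`du j k = ∂_j u_k`, `dv j k = ∂_j v_k`, where
`D*(u⊙v) = −Σ_k (Σ_j ∂_j(u_j v_k + u_k v_j)) dx^k`. -/
def dstarPair (c u v : Fin 3 → ℂ) (du dv : Fin 3 → Fin 3 → ℂ) : ℂ :=
  ∑ k, c k * (-(∑ j, (du j j * v k + u j * dv j k + du j k * v j + u k * dv j j)))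

/-- The pairing `⟨Q(γ,μ,ω)w, φ⟩`, where `Dw` is the family of weak partial derivatives
of `w` and `φ` is a smooth compactly supported graded form.  The weak derivatives of the
scalar products and of the symmetric tensor products appearing in `Q` are expanded by
the Leibniz rule. -/
def Qpair (C : Coeffs) (w : Form 3) (Dw : Fin 3 → Form 3) (φ : Form 3) : ℂ :=
  -(∫ x, (C.ω : ℂ) ^ 2 * (C.γ x * (C.μf x : ℂ) - ((C.ε₀ * C.μ₀ : ℝ) : ℂ))
      * ginner (w x) (φ x))
  + (∫ x, ginner ((2 * Complex.I * (C.ω : ℂ)) •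
      (vee (C.dsgm x) (proj 1 (w x) + proj 3 (w x))
        + wedge (C.dsgm x) (proj 0 (w x) + proj 2 (w x)))) (φ x))
  + (∫ x, ginner (C.da x) (C.da x)
        * ginner (proj 0 (w x) + proj 2 (w x)) (proj 0 (φ x) + proj 2 (φ x))
      + ginner (C.db x) (C.db x)
        * ginner (proj 1 (w x) + proj 3 (w x)) (proj 1 (φ x) + proj 3 (φ x)))
  + (∫ x,
      (∑ j, pd j C.a x *
        (ginner (proj 2 (Dw j x) - proj 0 (Dw j x)) (proj 0 (φ x) + proj 2 (φ x))
          + ginner (proj 2 (w x) - proj 0 (w x)) (proj 0 (Dcl φ j x) + proj 2 (Dcl φ j x))))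
      + ∑ j, pd j C.b x *
        (ginner (proj 1 (Dw j x) - proj 3 (Dw j x)) (proj 1 (φ x) + proj 3 (φ x))
          + ginner (proj 1 (w x) - proj 3 (w x)) (proj 1 (Dcl φ j x) + proj 3 (Dcl φ j x))))
  + (∫ x, dstarPair (fun k => pd k C.b x) (fun j => w x {j}) (fun j => φ x {j})
      (fun j k => Dw j x {k}) (fun j k => Dcl φ j x {k}))
  + (∫ x, dstarPair (fun k => pd k C.a x) (star2 (w x)) (star2 (φ x))
      (fun j k => star2 (Dw j x) k) (fun j k => star2 (Dcl φ j x) k))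

/-- The pairing `⟨Q̃(γ,μ,ω)w, φ⟩`. -/
def Qtpair (C : Coeffs) (w : Form 3) (Dw : Fin 3 → Form 3) (φ : Form 3) : ℂ :=
  -(∫ x, (C.ω : ℂ) ^ 2 * (C.γ x * (C.μf x : ℂ) - ((C.ε₀ * C.μ₀ : ℝ) : ℂ))
      * ginner (w x) (φ x))
  + (∫ x, ginner ((-(2 * Complex.I * (C.ω : ℂ))) • vee (C.dsgm x) (proj 2 (w x))
      + (2 * Complex.I * (C.ω : ℂ)) • wedge (C.dsgm x) (proj 1 (w x))) (φ x))
  + (∫ x, ginner (C.db x) (C.db x)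
        * ginner (proj 0 (w x) + proj 2 (w x)) (proj 0 (φ x) + proj 2 (φ x))
      + ginner (C.da x) (C.da x)
        * ginner (proj 1 (w x) + proj 3 (w x)) (proj 1 (φ x) + proj 3 (φ x)))
  + (∫ x,
      (∑ j, pd j C.b x *
        (ginner (proj 0 (Dw j x) - proj 2 (Dw j x)) (proj 0 (φ x) + proj 2 (φ x))
          + ginner (proj 0 (w x) - proj 2 (w x)) (proj 0 (Dcl φ j x) + proj 2 (Dcl φ j x))))
      + ∑ j, pd j C.a x *
        (ginner (proj 3 (Dw j x) - proj 1 (Dw j x)) (proj 1 (φ x) + proj 3 (φ x))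
          + ginner (proj 3 (w x) - proj 1 (w x)) (proj 1 (Dcl φ j x) + proj 3 (Dcl φ j x))))
  - (∫ x, dstarPair (fun k => pd k C.a x) (fun j => w x {j}) (fun j => φ x {j})
      (fun j k => Dw j x {k}) (fun j k => Dcl φ j x {k}))
  - (∫ x, dstarPair (fun k => pd k C.b x) (star2 (w x)) (star2 (φ x))
      (fun j k => star2 (Dw j x) k) (fun j k => star2 (Dcl φ j x) k))

/-- The pairing `⟨q̃(γ,μ,ω)(v⁰+v³), φ⟩` for `φ = φ⁰ + φ³`, where `Dv` is the family of
weak partial derivatives of `v`. -/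
def qtPair (C : Coeffs) (v : Form 3) (Dv : Fin 3 → Form 3) (φ : Form 3) : ℂ :=
  -(∫ x, (C.ω : ℂ) ^ 2 * (C.γ x * (C.μf x : ℂ) - ((C.ε₀ * C.μ₀ : ℝ) : ℂ))
      * ginner (proj 0 (v x) + proj 3 (v x)) (φ x))
  + ∫ x, ginner (C.db x) (C.db x) * (v x ∅ * φ x ∅)
      + ginner (C.da x) (C.da x) * (v x univ * φ x univ)
      + (∑ j, pd j C.b x * (Dv j x ∅ * φ x ∅ + v x ∅ * Dcl φ j x ∅))
      + ∑ j, pd j C.a x * (Dv j x univ * φ x univ + v x univ * Dcl φ j x univ)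

section

open scoped SchwartzMap LineDeriv Laplacian

open TemperedDistribution

lemma bessel_two {E : Type*} [NormedAddCommGroup E] [InnerProductSpace ℝ E] [FiniteDimensional ℝ E]
    [MeasurableSpace E] [BorelSpace E] (f : 𝓢'(E, ℂ)) :
    besselPotential E ℂ 2 f = f + (-(((2 * Real.pi) ^ 2)⁻¹ : ℝ) : ℂ) • Δ f := by
  rw [laplacian_eq_fourierMultiplierCLM, besselPotential]
  have h1 : (fun x : E => (((1 + ‖x‖ ^ 2) ^ ((2 : ℝ) / 2) : ℝ) : ℂ))
      = (fun _ => (1 : ℂ)) + fun x : E => ((‖x‖ ^ 2 : ℝ) : ℂ) := by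
    ext x; simp
  rw [h1]
  have h2 : fourierMultiplierCLM ℂ ((fun _ => (1 : ℂ)) + fun x : E => ((‖x‖ ^ 2 : ℝ) : ℂ)) f
      = f + fourierMultiplierCLM ℂ (fun x : E => ((‖x‖ ^ 2 : ℝ) : ℂ)) f := by
    have h3 : fourierMultiplierCLM ℂ (fun _ : E => (1 : ℂ)) f = f := by simp
    conv_rhs => rw [← h3]
    simp only [fourierMultiplierCLM_apply]
    rw [smulLeftCLM_add (by fun_prop) (by fun_prop)]
    simp [FourierTransform.fourierInv_add]
  rw [h2]
  congr 1
  ext ψ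
  have hp : ((Real.pi : ℝ) : ℂ) ≠ 0 := by exact_mod_cast Real.pi_ne_zero
  simp

lemma memSobolev_one {E : Type*} [NormedAddCommGroup E] [InnerProductSpace ℝ E]
    [FiniteDimensional ℝ E]
    [MeasurableSpace E] [BorelSpace E] {ι : Type*} [Fintype ι] (e : ι → E)
    (f G0 : Lp ℂ 2 (volume : Measure E)) (G : ι → Lp ℂ 2 (volume : Measure E))
    (h : Δ (f : 𝓢'(E, ℂ)) = ∑ k, ∂_{e k} (G k : 𝓢'(E, ℂ)) + (G0 : 𝓢'(E, ℂ))) :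
    MemSobolev 1 2 (f : 𝓢'(E, ℂ)) := by
  have hL : ∀ g : Lp ℂ 2 (volume : Measure E), MemSobolev 0 2 (g : 𝓢'(E, ℂ)) :=
    fun g => memSobolev_zero_iff.2 ⟨g, rfl⟩
  have hb : MemSobolev (-1) 2 (besselPotential E ℂ 2 (f : 𝓢'(E, ℂ))) := by
    rw [bessel_two, h]
    have hs : ∀ s : Finset ι, MemSobolev (-1) 2 (∑ k ∈ s, ∂_{e k} (G k : 𝓢'(E, ℂ))) := by
      intro s
      classical
      induction s using Finset.induction_on with
      | empty => simp
      | insert a s ha ih =>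
        rw [Finset.sum_insert ha]
        refine MemSobolev.add ?_ ih
        have := (hL (G a)).lineDerivOp (m := e a)
        simpa using this
    exact ((hL f).mono (by norm_num)).add (((hs _).add ((hL G0).mono (by norm_num))).smul _)
  rw [memSobolev_besselPotential_iff] at hb
  norm_num at hb
  exact hb

/-- Fourier-analytic elliptic regularity -/
lemma fourier_reg {E : Type*} [NormedAddCommGroup E] [InnerProductSpace ℝ E]
    [FiniteDimensional ℝ E]
    [MeasurableSpace E] [BorelSpace E] {ι : Type*} [Fintype ι] (e : ι → E)
    (f G0 : Lp ℂ 2 (volume : Measure E)) (G : ι → Lp ℂ 2 (volume : Measure E))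
    (h : ∀ ψ : 𝓢(E, ℂ), ∫ x, Δ ψ x * f x = (∑ k, -(∫ x, (∂_{e k} ψ) x * G k x)) + ∫ x, ψ x * G0 x)
    (j : E) : ∃ g : Lp ℂ 2 (volume : Measure E), 
      ∀ ψ : 𝓢(E, ℂ), ∫ x, ψ x * g x = -∫ x, (∂_{j} ψ) x * f x := by
  have hm : MemSobolev 1 2 (f : 𝓢'(E, ℂ)) := by
    apply memSobolev_one e f G0 G
    ext ψ
    rw [laplacian_apply_apply, Lp.toTemperedDistribution_apply]
    have := h ψ
    simp only [smul_eq_mul]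
    rw [this]
    simp [integral_neg]
  have h0 := hm.lineDerivOp (m := j)
  norm_num at h0
  obtain ⟨g, hg⟩ := memSobolev_zero_iff.1 h0
  refine ⟨g, fun ψ => ?_⟩
  have := congrArg (fun T : 𝓢'(E, ℂ) => T ψ) hg
  simp only [lineDerivOp_apply_apply, Lp.toTemperedDistribution_apply, smul_eq_mul] at this
  rw [← this, ← integral_neg]
  simp

end

section

open scoped SchwartzMap LineDeriv Laplacian


abbrev E3 := EuclideanSpace ℝ (Fin 3)

lemma pd_comp_toLp (ψ : EuclideanSpace ℝ (Fin 3) → ℂ) (hψ : Differentiable ℝ ψ) (k : Fin 3)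
    (x : Pt 3) :
    pd k (fun y : Pt 3 => ψ (WithLp.toLp 2 y)) x
      = fderiv ℝ ψ (WithLp.toLp 2 x) (EuclideanSpace.single k 1) := by
  unfold pd
  have h := (hψ (WithLp.toLp 2 x)).hasFDerivAt.comp x
    ((EuclideanSpace.equiv (Fin 3) ℝ).symm.toContinuousLinearMap.hasFDerivAt (x := x))
  have h2 : fderiv ℝ (fun y : Pt 3 => ψ (WithLp.toLp 2 y)) x = _ := h.fderiv
  rw [h2]
  rfl

/-- elliptic regularity for globally square integrable functions -/
lemma reg_compact (f G0 : Pt 3 → ℂ) (G : Fin 3 → Pt 3 → ℂ) (hf : MemLp f 2 volume)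
    (hG0 : MemLp G0 2 volume) (hG : ∀ k, MemLp (G k) 2 volume)
    (h : ∀ ψ : Pt 3 → ℂ, ContDiff ℝ (⊤ : ℕ∞) ψ →
      ∫ x, (∑ k, pd k (pd k ψ) x) * f x
        = (∑ k, -(∫ x, pd k ψ x * G k x)) + ∫ x, ψ x * G0 x) (j : Fin 3) :
    ∃ g : Pt 3 → ℂ, MemLp g 2 volume ∧ HasWeakPD j f g := by
  have mp : MeasurePreserving (@WithLp.ofLp 2 (Fin 3 → ℝ)) := PiLp.volume_preserving_ofLp (Fin 3)
  have mp' : MeasurePreserving (@WithLp.toLp 2 (Fin 3 → ℝ)) := PiLp.volume_preserving_toLp (Fin 3)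
  have me : MeasurableEmbedding (@WithLp.toLp 2 (Fin 3 → ℝ)) :=
    (MeasurableEquiv.toLp 2 (Fin 3 → ℝ)).measurableEmbedding
  have me' : MeasurableEmbedding (@WithLp.ofLp 2 (Fin 3 → ℝ)) :=
    (MeasurableEquiv.toLp 2 (Fin 3 → ℝ)).symm.measurableEmbedding
  have hL : ∀ {u : Pt 3 → ℂ}, MemLp u 2 volume → MemLp (fun x : E3 => u x.ofLp) 2 volume :=
    fun hu => hu.comp_measurePreserving mp
  -- transfer of integrals
  have key : ∀ (u : Pt 3 → ℂ) (hu : MemLp u 2 volume) (p : E3 → ℂ),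
      ∫ x : E3, p x * (hL hu).toLp _ x = ∫ x : Pt 3, p (WithLp.toLp 2 x) * u x := by
    intro u hu p
    have h1 : ∫ x : E3, p x * (hL hu).toLp _ x = ∫ x : E3, p x * u x.ofLp := by
      apply integral_congr_ae
      filter_upwards [(hL hu).coeFn_toLp] with x hx
      rw [hx]
    rw [h1, ← mp'.integral_comp me (fun x : E3 => p x * u x.ofLp)]
  have hfd : ∀ (ψ : 𝓢(E3, ℂ)) (k : Fin 3) (x : Pt 3),
      pd k (fun y : Pt 3 => ψ (WithLp.toLp 2 y)) x
        = (∂_{EuclideanSpace.single k (1 : ℝ)} ψ) (WithLp.toLp 2 x) := by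
    intro ψ k x
    rw [pd_comp_toLp _ ψ.differentiable, SchwartzMap.lineDerivOp_apply_eq_fderiv]
  obtain ⟨g, hg⟩ := fourier_reg (fun k : Fin 3 => (EuclideanSpace.single k (1 : ℝ) : E3))
    ((hL hf).toLp _) ((hL hG0).toLp _) (fun k => (hL (hG k)).toLp _) (by
      intro ψ
      rw [key f hf, key G0 hG0]
      have hk : ∀ k : Fin 3, ∫ x : E3, (∂_{EuclideanSpace.single k (1 : ℝ)} ψ) x
          * (hL (hG k)).toLp _ x = _ := fun k => key (G k) (hG k) _
      simp only [hk]
      have := h (fun y => ψ (WithLp.toLp 2 y)) ((ψ.smooth _).comp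
        (EuclideanSpace.equiv (Fin 3) ℝ).symm.contDiff)
      simp only [hfd] at this
      rw [← this]
      congr 1
      ext x
      congr 1
      have h3 := SchwartzMap.laplacian_eq_sum (EuclideanSpace.basisFun (Fin 3) ℝ) ψ
      rw [h3]
      simp only [SchwartzMap.sum_apply, EuclideanSpace.basisFun_apply]
      refine Finset.sum_congr rfl fun k _ => ?_
      have : (pd k fun y : Pt 3 => ψ (WithLp.toLp 2 y)) = fun y =>
        (∂_{EuclideanSpace.single k (1 : ℝ)} ψ) (WithLp.toLp 2 y) := by
        ext y; exact hfd ψ k y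
      rw [this, hfd]) (EuclideanSpace.single j (1 : ℝ))
  refine ⟨fun x => g (WithLp.toLp 2 x), (Lp.memLp g).comp_measurePreserving mp', ?_⟩
  intro φ hφ
  have hc : HasCompactSupport (fun x : E3 => φ x.ofLp) :=
    hφ.2.comp_homeomorph (EuclideanSpace.equiv (Fin 3) ℝ).toHomeomorph
  have hs : ContDiff ℝ (⊤ : ℕ∞) (fun x : E3 => φ x.ofLp) :=
    hφ.1.comp (EuclideanSpace.equiv (Fin 3) ℝ).contDiff
  have h4 := hg (hc.toSchwartzMap hs)
  rw [key f hf, ← mp'.integral_comp me] at h4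
  simp only [← hfd] at h4
  calc _ = ∫ x : Pt 3, (hc.toSchwartzMap hs) (WithLp.toLp 2 x) * g (WithLp.toLp 2 x) := by
        congr 1
        ext x
        exact mul_comm _ _
    _ = _ := h4
    _ = _ := by
        congr 2
        ext x
        exact mul_comm _ _

end

section

/-! ### partial derivatives and test functions -/

lemma pd_mul {f g : Pt 3 → ℂ} (hf : Differentiable ℝ f) (hg : Differentiable ℝ g) (j : Fin 3)
    (x : Pt 3) : pd j (fun y => f y * g y) x = pd j f x * g x + f x * pd j g x := by
  unfold pd
  rw [fderiv_fun_mul (hf x) (hg x)]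
  simp
  ring

lemma pd_add {f g : Pt 3 → ℂ} (hf : Differentiable ℝ f) (hg : Differentiable ℝ g) (j : Fin 3)
    (x : Pt 3) : pd j (fun y => f y + g y) x = pd j f x + pd j g x := by
  unfold pd
  rw [fderiv_fun_add (hf x) (hg x)]
  simp

lemma pd_const_mul {f : Pt 3 → ℂ} (hf : Differentiable ℝ f) (c : ℂ) (j : Fin 3)
    (x : Pt 3) : pd j (fun y => c * f y) x = c * pd j f x := by
  unfold pd
  rw [fderiv_const_mul (hf x)]
  simp

lemma pd_smooth {f : Pt 3 → ℂ} (hf : ContDiff ℝ (⊤ : ℕ∞) f) (j : Fin 3) :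
    ContDiff ℝ (⊤ : ℕ∞) (pd j f) := by
  have : ContDiff ℝ (⊤ : ℕ∞) (fderiv ℝ f) := hf.fderiv_right (by simp)
  exact this.clm_apply contDiff_const

lemma pd_continuous {f : Pt 3 → ℂ} (hf : ContDiff ℝ 1 f) (j : Fin 3) :
    Continuous (pd j f) :=
  (hf.continuous_fderiv (by simp)).clm_apply continuous_const

lemma smooth_diff {f : Pt 3 → ℂ} (hf : ContDiff ℝ (⊤ : ℕ∞) f) : Differentiable ℝ f :=
  hf.differentiable (by simp)

lemma pd_comm {f : Pt 3 → ℂ} (hf : ContDiff ℝ (⊤ : ℕ∞) f) (j k : Fin 3) (x : Pt 3) :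
    pd j (pd k f) x = pd k (pd j f) x := by
  have hs : IsSymmSndFDerivAt ℝ f x :=
    (hf.contDiffAt).isSymmSndFDerivAt (by simp; exact WithTop.coe_le_coe.2 (le_top : (2 : ℕ∞) ≤ ⊤))
  have hd : Differentiable ℝ (fderiv ℝ f) :=
    (hf.fderiv_right (m := (⊤ : ℕ∞)) (by simp)).differentiable (by simp)
  have key : ∀ a b : Fin 3, pd a (pd b f) x
      = fderiv ℝ (fderiv ℝ f) x (Pi.single a 1) (Pi.single b 1) := by
    intro a b
    show fderiv ℝ (fun y => fderiv ℝ f y (Pi.single b 1)) x (Pi.single a 1) = _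
    rw [fderiv_clm_apply (hd x) (by fun_prop)]
    simp
  rw [key, key]
  exact hs _ _

lemma pd_support {f : Pt 3 → ℂ} (j : Fin 3) : tsupport (pd j f) ⊆ tsupport f := by
  refine (closure_mono ?_).trans (tsupport_fderiv_subset ℝ (f := f))
  intro x hx
  simp only [Function.mem_support, pd] at hx ⊢
  intro h
  exact hx (by rw [h]; simp)

lemma IsTest.pd {φ : Pt 3 → ℂ} (h : IsTest φ) (j : Fin 3) : IsTest (pd j φ) :=
  ⟨pd_smooth h.1 j, h.2.mono' (subset_closure.trans (pd_support j))⟩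

lemma IsTest.mul_smooth {φ ψ : Pt 3 → ℂ} (h : IsTest φ) (hψ : ContDiff ℝ (⊤ : ℕ∞) ψ) :
    IsTest (fun x => φ x * ψ x) :=
  ⟨h.1.mul hψ, h.2.mul_right⟩

lemma IsTest.cont {φ : Pt 3 → ℂ} (h : IsTest φ) : Continuous φ := h.1.continuous

/-! ### L2loc -/

lemma L2loc.memLp {f : Pt 3 → ℂ} (h : L2loc f) {K : Set (Pt 3)} (hK : IsCompact K) :
    MemLp f 2 (volume.restrict K) :=
  (memLp_two_iff_integrable_sq_norm h.1.restrict).2 (h.2 K hK)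

lemma L2loc.of_memLp {f : Pt 3 → ℂ} (h1 : AEStronglyMeasurable f (volume : Measure (Pt 3)))
    (h : ∀ K : Set (Pt 3), IsCompact K → MemLp f 2 (volume.restrict K)) : L2loc f :=
  ⟨h1, fun K hK => (memLp_two_iff_integrable_sq_norm h1.restrict).1 (h K hK)⟩

lemma L2loc.add {f g : Pt 3 → ℂ} (hf : L2loc f) (hg : L2loc g) : L2loc (fun x => f x + g x) :=
  .of_memLp (hf.1.add hg.1) fun _ hK => (hf.memLp hK).add (hg.memLp hK)

lemma L2loc.zero : L2loc (fun _ : Pt 3 => (0 : ℂ)) :=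
  .of_memLp aestronglyMeasurable_const fun _ _ => by simp

lemma L2loc.cmul {f c : Pt 3 → ℂ} (hf : L2loc f) (hc : Continuous c) :
    L2loc (fun x => c x * f x) := by
  refine .of_memLp (hc.aestronglyMeasurable.mul hf.1) fun K hK => ?_
  obtain ⟨M, hM⟩ := hK.exists_bound_of_continuousOn hc.continuousOn
  refine (hf.memLp hK).of_le_mul (c := M) (hc.aestronglyMeasurable.mul hf.1).restrict ?_
  refine (ae_restrict_iff' hK.measurableSet).2 (Filter.Eventually.of_forall fun x hx => ?_)
  rw [norm_mul]
  gcongr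
  exact hM x hx

lemma L2loc.constmul {f : Pt 3 → ℂ} (hf : L2loc f) (c : ℂ) : L2loc (fun x => c * f x) :=
  hf.cmul continuous_const

lemma L2loc.sum {ι : Type*} (s : Finset ι) {f : ι → Pt 3 → ℂ} (h : ∀ i ∈ s, L2loc (f i)) :
    L2loc (fun x => ∑ i ∈ s, f i x) := by
  classical
  induction s using Finset.induction_on with
  | empty => simpa using L2loc.zero
  | insert a s ha ih =>
    simp only [Finset.sum_insert ha]
    exact (h a (by simp)).add (ih fun i hi => h i (by simp [hi]))

lemma L2loc.locInt {f : Pt 3 → ℂ} (hf : L2loc f) : LocallyIntegrable f volume := by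
  refine (locallyIntegrable_iff).2 fun K hK => ?_
  have : IsFiniteMeasure (volume.restrict K) := ⟨by simpa using hK.measure_lt_top⟩
  exact (hf.memLp hK).integrable (by norm_num)

lemma L2loc.mul_test {f φ : Pt 3 → ℂ} (hf : L2loc f) (hφ : IsTest φ) :
    MemLp (fun x => φ x * f x) 2 volume := by
  have h1 := (hf.cmul hφ.cont).memLp hφ.2
  rw [← memLp_indicator_iff_restrict hφ.2.measurableSet] at h1
  refine h1.congr_norm (hφ.cont.aestronglyMeasurable.mul hf.1)
    (Filter.Eventually.of_forall fun x => ?_)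
  by_cases hx : x ∈ tsupport φ
  · simp [hx]
  · simp [hx, image_eq_zero_of_notMem_tsupport hx]

lemma locInt_mul_cc {f φ : Pt 3 → ℂ} (hf : LocallyIntegrable f volume) (hφ : Continuous φ)
    (hc : HasCompactSupport φ) : Integrable (fun x => f x * φ x) volume := by
  have := hf.integrable_smul_left_of_hasCompactSupport hφ hc
  simpa [mul_comm] using this

lemma exists_cutoff (N : ℕ) : ∃ χ : Pt 3 → ℂ, IsTest χ ∧ ∀ x ∈ Metric.ball (0 : Pt 3) N, χ x = 1 := by
  let b : ContDiffBump (0 : Pt 3) := ⟨N + 1, N + 2, by positivity, by linarith⟩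
  refine ⟨fun x => ((b x : ℝ) : ℂ), ⟨Complex.ofRealCLM.contDiff.comp b.contDiff, ?_⟩, ?_⟩
  · exact b.hasCompactSupport.comp_left (g := fun r : ℝ => (r : ℂ)) (by simp)
  · intro x hx
    have : b x = 1 := b.one_of_mem_closedBall (by
      have := Metric.mem_ball.1 hx
      simp only [Metric.mem_closedBall]
      show dist x 0 ≤ (N : ℝ) + 1
      linarith)
    simp [this]

end

section

lemma lap_mul {χ ψ : Pt 3 → ℂ} (hχ : ContDiff ℝ (⊤ : ℕ∞) χ) (hψ : ContDiff ℝ (⊤ : ℕ∞) ψ)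
    (k : Fin 3) (x : Pt 3) : pd k (pd k (fun y => χ y * ψ y)) x
      = pd k (pd k χ) x * ψ x + 2 * (pd k χ x * pd k ψ x) + χ x * pd k (pd k ψ) x := by
  have h1 : pd k (fun y => χ y * ψ y) = fun y => pd k χ y * ψ y + χ y * pd k ψ y := by
    ext y; exact pd_mul (smooth_diff hχ) (smooth_diff hψ) k y
  have d1 := smooth_diff hχ
  have d2 := smooth_diff hψ
  have d3 := smooth_diff (pd_smooth hχ k)
  have d4 := smooth_diff (pd_smooth hψ k)
  rw [h1, pd_add (f := fun y => pd k χ y * ψ y) (g := fun y => χ y * pd k ψ y)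
    (d3.mul d2) (d1.mul d4), pd_mul d3 d2, pd_mul d1 d4]
  ring

/-- weak derivative of a cut-off of `u`. -/
lemma reg_cut (u : Pt 3 → ℂ) (F : Fin 3 → Pt 3 → ℂ) (hu : L2loc u) (hF : ∀ k, L2loc (F k))
    (h : ∀ θ : Pt 3 → ℂ, IsTest θ →
      ∫ x, u x * ∑ k, pd k (pd k θ) x = ∑ k, ∫ x, F k x * pd k θ x)
    (χ : Pt 3 → ℂ) (hχ : IsTest χ) (j : Fin 3) :
    ∃ g : Pt 3 → ℂ, MemLp g 2 volume ∧ HasWeakPD j (fun x => χ x * u x) g := by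
  refine reg_compact (fun x => χ x * u x)
    (fun x => ∑ k, (pd k χ x * F k x - pd k (pd k χ) x * u x))
    (fun k x => 2 * (pd k χ x * u x) - χ x * F k x) (hu.mul_test hχ)
    (memLp_finsetSum _ fun k _ => ((hF k).mul_test (hχ.pd k)).sub
      (hu.mul_test ((hχ.pd k).pd k)))
    (fun k => ((hu.mul_test (hχ.pd k)).const_mul 2).sub ((hF k).mul_test hχ)) ?_ j
  intro ψ hψ
  have hθ := h _ (hχ.mul_smooth hψ)
  -- integrability
  have iu : ∀ {φ : Pt 3 → ℂ}, IsTest φ → Integrable (fun x => u x * φ x) volume :=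
    fun hφ => locInt_mul_cc hu.locInt hφ.cont hφ.2
  have iF : ∀ k {φ : Pt 3 → ℂ}, IsTest φ → Integrable (fun x => F k x * φ x) volume :=
    fun k _ hφ => locInt_mul_cc (hF k).locInt hφ.cont hφ.2
  have sk := fun k => pd_smooth hψ k
  have A : ∀ k, Integrable (fun x => u x * (pd k (pd k χ) x * ψ x)) volume :=
    fun k => iu (((hχ.pd k).pd k).mul_smooth hψ)
  have B : ∀ k, Integrable (fun x => u x * (pd k χ x * pd k ψ x)) volume :=
    fun k => iu ((hχ.pd k).mul_smooth (sk k))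
  have Cc : ∀ k, Integrable (fun x => u x * (χ x * pd k (pd k ψ) x)) volume :=
    fun k => iu (hχ.mul_smooth (pd_smooth (sk k) k))
  have D : ∀ k, Integrable (fun x => F k x * (pd k χ x * ψ x)) volume :=
    fun k => iF k ((hχ.pd k).mul_smooth hψ)
  have E : ∀ k, Integrable (fun x => F k x * (χ x * pd k ψ x)) volume :=
    fun k => iF k (hχ.mul_smooth (sk k))
  have e1 : ∫ x, u x * ∑ k, pd k (pd k (fun y => χ y * ψ y)) x
      = ∑ k, ((∫ x, u x * (pd k (pd k χ) x * ψ x)) + 2 * (∫ x, u x * (pd k χ x * pd k ψ x))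
        + ∫ x, u x * (χ x * pd k (pd k ψ) x)) := by
    have : ∀ x, u x * ∑ k, pd k (pd k (fun y => χ y * ψ y)) x
      = ∑ k, (u x * (pd k (pd k χ) x * ψ x) + 2 * (u x * (pd k χ x * pd k ψ x))
          + u x * (χ x * pd k (pd k ψ) x)) := by
      intro x
      rw [Finset.mul_sum]
      refine Finset.sum_congr rfl fun k _ => ?_
      rw [lap_mul hχ.1 hψ]; ring
    simp only [this]
    refine (integral_finsetSum _ fun k _ => ((A k).add ((B k).const_mul 2)).add (Cc k)).trans ?_
    refine Finset.sum_congr rfl fun k _ => ?_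
    refine (integral_add ((A k).add ((B k).const_mul 2)) (Cc k)).trans ?_
    rw [integral_add' (A k) ((B k).const_mul 2), integral_const_mul]
  have e2 : ∀ k, ∫ x, F k x * pd k (fun y => χ y * ψ y) x
      = (∫ x, F k x * (pd k χ x * ψ x)) + ∫ x, F k x * (χ x * pd k ψ x) := by
    intro k
    rw [← integral_add (D k) (E k)]
    congr 1; ext x
    rw [pd_mul (smooth_diff hχ.1) (smooth_diff hψ)]; ring
  have e3 : ∫ x, (∑ k, pd k (pd k ψ) x) * (χ x * u x)
      = ∑ k, ∫ x, u x * (χ x * pd k (pd k ψ) x) := by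
    rw [← integral_finsetSum _ fun k _ => Cc k]
    congr 1; ext x
    rw [Finset.sum_mul]
    exact Finset.sum_congr rfl fun k _ => by ring
  have e4 : ∀ k, ∫ x, pd k ψ x * (2 * (pd k χ x * u x) - χ x * F k x)
      = 2 * (∫ x, u x * (pd k χ x * pd k ψ x)) - ∫ x, F k x * (χ x * pd k ψ x) := by
    intro k
    rw [← integral_const_mul, ← integral_sub ((B k).const_mul 2) (E k)]
    congr 1; ext x; ring
  have e5 : ∫ x, ψ x * ∑ k, (pd k χ x * F k x - pd k (pd k χ) x * u x)
      = ∑ k, ((∫ x, F k x * (pd k χ x * ψ x)) - ∫ x, u x * (pd k (pd k χ) x * ψ x)) := by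
    have : ∀ x, ψ x * ∑ k, (pd k χ x * F k x - pd k (pd k χ) x * u x)
      = ∑ k, (F k x * (pd k χ x * ψ x) - u x * (pd k (pd k χ) x * ψ x)) := by
      intro x
      rw [Finset.mul_sum]
      exact Finset.sum_congr rfl fun k _ => by ring
    simp only [this]
    refine (integral_finsetSum _ fun k _ => (D k).sub (A k)).trans ?_
    refine Finset.sum_congr rfl fun k _ => ?_
    exact integral_sub (D k) (A k)
  rw [e1] at hθ
  simp only [e2] at hθ
  rw [e3, e5]
  simp only [e4]
  simp only [Finset.sum_add_distrib, Finset.sum_sub_distrib, Finset.sum_neg_distrib] at hθ ⊢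
  linear_combination hθ

lemma weakPD_local {u χ g : Pt 3 → ℂ} {j : Fin 3} {N : ℕ}
    (hχ : ∀ x ∈ Metric.ball (0 : Pt 3) N, χ x = 1)
    (hg : HasWeakPD j (fun x => χ x * u x) g) (φ : Pt 3 → ℂ) (hφ : IsTest φ)
    (hs : tsupport φ ⊆ Metric.ball (0 : Pt 3) N) :
    ∫ x, g x * φ x = -∫ x, u x * pd j φ x := by
  rw [hg φ hφ]
  congr 2
  ext x
  by_cases hx : x ∈ tsupport φ
  · simp only [hχ x (hs hx), one_mul]
  · rw [image_eq_zero_of_notMem_tsupport (fun h => hx (pd_support j h))]; simp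

/-- local elliptic regularity -/
lemma reg_loc (u : Pt 3 → ℂ) (F : Fin 3 → Pt 3 → ℂ) (hu : L2loc u) (hF : ∀ k, L2loc (F k))
    (h : ∀ θ : Pt 3 → ℂ, IsTest θ →
      ∫ x, u x * ∑ k, pd k (pd k θ) x = ∑ k, ∫ x, F k x * pd k θ x) (j : Fin 3) :
    ∃ g : Pt 3 → ℂ, HasWeakPD j u g ∧ L2loc g := by
  choose χ hχt hχ1 using exists_cutoff
  choose g hgm hgw using fun N => reg_cut u F hu hF h (χ N) (hχt N) j
  have hloc : ∀ N, LocallyIntegrable (g N) volume := fun N =>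
    (hgm N).locallyIntegrable (by norm_num)
  have hae : ∀ N M : ℕ, ∀ᵐ x, x ∈ Metric.ball (0 : Pt 3) (min N M : ℕ) → g N x = g M x := by
    intro N M
    have := (Metric.isOpen_ball (x := (0 : Pt 3)) (ε := ((min N M : ℕ) : ℝ))
      ).ae_eq_zero_of_integral_contDiff_smul_eq_zero (μ := volume)
      (f := fun x => g N x - g M x)
      (((hloc N).sub (hloc M)).locallyIntegrableOn _) ?_
    · filter_upwards [this] with x hx hx'
      exact sub_eq_zero.1 (hx hx')
    · intro p hp hc hs
      have ht : IsTest (fun x => ((p x : ℝ) : ℂ)) :=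
        ⟨Complex.ofRealCLM.contDiff.comp hp, hc.comp_left (g := fun r : ℝ => (r : ℂ)) (by simp)⟩
      have hs' : tsupport (fun x => ((p x : ℝ) : ℂ)) ⊆ Metric.ball (0 : Pt 3) (min N M : ℕ) := by
        refine (closure_mono ?_).trans hs
        intro x hx
        simpa using hx
      have h1 := weakPD_local (hχ1 N) (hgw N) _ ht
        (hs'.trans (Metric.ball_subset_ball (by exact_mod_cast min_le_left _ _)))
      have h2 := weakPD_local (hχ1 M) (hgw M) _ ht
        (hs'.trans (Metric.ball_subset_ball (by exact_mod_cast min_le_right _ _)))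
      have h3 : ∫ x, (g N x - g M x) * ((p x : ℝ) : ℂ) = 0 := by
        simp only [sub_mul]
        rw [integral_sub (locInt_mul_cc (hloc N) ht.cont ht.2)
          (locInt_mul_cc (hloc M) ht.cont ht.2), h1, h2, sub_self]
      rw [← h3]
      congr 1; ext x
      simp [mul_comm]
  let G : Pt 3 → ℂ := fun x => g (⌈‖x‖⌉₊ + 1) x
  have hG : ∀ M : ℕ, ∀ᵐ x, x ∈ Metric.ball (0 : Pt 3) M → G x = g M x := by
    intro M
    have := ae_all_iff.2 fun N => hae N M
    filter_upwards [this] with x hx hxM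
    apply hx
    rw [mem_ball_zero_iff] at hxM ⊢
    push_cast
    rw [lt_min_iff]
    exact ⟨(Nat.le_ceil _).trans_lt (by linarith), hxM⟩
  have hGr : ∀ M : ℕ, G =ᵐ[volume.restrict (Metric.ball (0 : Pt 3) M)] g M := fun M =>
    (ae_restrict_iff' measurableSet_ball).2 (hG M)
  have hK : ∀ K : Set (Pt 3), IsCompact K → ∃ M : ℕ, K ⊆ Metric.ball (0 : Pt 3) M := by
    intro K hK
    obtain ⟨r, hr⟩ := hK.isBounded.subset_ball (0 : Pt 3)
    obtain ⟨M, hM⟩ := exists_nat_ge r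
    exact ⟨M, hr.trans (Metric.ball_subset_ball hM)⟩
  refine ⟨G, ?_, ?_⟩
  · intro φ hφ
    obtain ⟨M, hM⟩ := hK _ hφ.2
    rw [← weakPD_local (hχ1 M) (hgw M) φ hφ hM]
    apply integral_congr_ae
    filter_upwards [hG M] with x hx
    by_cases hx' : x ∈ tsupport φ
    · rw [hx (hM hx')]
    · rw [image_eq_zero_of_notMem_tsupport hx']; simp
  · refine L2loc.of_memLp ?_ ?_
    · have h1 : AEStronglyMeasurable G (volume.restrict (⋃ M : ℕ, Metric.ball (0 : Pt 3) M)) :=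
        AEStronglyMeasurable.iUnion fun M => (hgm M).1.restrict.congr (hGr M).symm
      rwa [Metric.iUnion_ball_nat, Measure.restrict_univ] at h1
    · intro K hK'
      obtain ⟨M, hM⟩ := hK K hK'
      have h2 : G =ᵐ[volume.restrict K] g M := ae_restrict_of_ae_restrict_of_subset hM (hGr M)
      exact ((hgm M).restrict K).ae_eq h2.symm

end

section

open scoped Convolution
open Filter Topology

def bmp (n : ℕ) : ContDiffBump (0 : Pt 3) :=
  ⟨1 / (2 * (n + 1)), 1 / (n + 1), by positivity, by
    have h0 : (0:ℝ) < n + 1 := by positivity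
    exact one_div_lt_one_div_of_lt h0 (by linarith)⟩

lemma bmp_le (n : ℕ) : (bmp n).rOut ≤ 1 := by
  show 1 / ((n : ℝ) + 1) ≤ 1
  rw [div_le_one (by positivity)]
  have : (0:ℝ) ≤ n := by positivity
  linarith

/-- mollification -/
def moll (n : ℕ) (h : Pt 3 → ℂ) : Pt 3 → ℂ :=
  (bmp n).normed volume ⋆[ContinuousLinearMap.lsmul ℝ ℝ, volume] h

lemma moll_zero (n : ℕ) {h : Pt 3 → ℂ} (hc : Continuous h) {x : Pt 3}
    (hx : x ∉ Metric.cthickening 1 (tsupport h)) : moll n h x = 0 := by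
  have key : ∀ y ∈ Metric.ball x 1, h y = 0 := by
    intro y hy
    by_contra hne
    apply hx
    refine Metric.mem_cthickening_of_dist_le x y 1 _ (subset_tsupport _ hne) ?_
    rw [dist_comm]; exact (Metric.mem_ball.1 hy).le
  have h0 : h x = 0 := key x (by simp)
  have := (bmp n).dist_normed_convolution_le (μ := volume) (x₀ := x) (ε := 0)
    hc.aestronglyMeasurable (fun y hy => by
      rw [h0, key y (Metric.ball_subset_ball (bmp_le n) hy)]; simp)
  rw [h0] at this
  exact dist_le_zero.1 this

lemma moll_bound (n : ℕ) {h : Pt 3 → ℂ} (hc : Continuous h) {M : ℝ} (hM : ∀ x, ‖h x‖ ≤ M)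
    (x : Pt 3) : ‖moll n h x‖ ≤ 3 * M := by
  have := (bmp n).dist_normed_convolution_le (μ := volume) (x₀ := x) (ε := 2 * M)
    hc.aestronglyMeasurable (fun y hy => by
      rw [dist_eq_norm]
      exact (norm_sub_le _ _).trans (by linarith [hM x, hM y]))
  rw [dist_eq_norm] at this
  have h2 := norm_le_insert' (moll n h x) (h x)
  have h3 := hM x
  change ‖moll n h x - h x‖ ≤ _ at this
  linarith

lemma moll_tendsto {h : Pt 3 → ℂ} (hc : Continuous h) (x : Pt 3) :
    Tendsto (fun n => moll n h x) atTop (𝓝 (h x)) :=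
  ContDiffBump.convolution_tendsto_right_of_continuous (φ := bmp) (μ := volume)
    (tendsto_one_div_add_atTop_nhds_zero_nat (𝕜 := ℝ)) hc x

lemma moll_cont (n : ℕ) {h : Pt 3 → ℂ} (hc : Continuous h) : ContDiff ℝ (⊤ : ℕ∞) (moll n h) :=
  HasCompactSupport.contDiff_convolution_left _ ((bmp n).hasCompactSupport_normed)
    ((bmp n).contDiff_normed) hc.locallyIntegrable

lemma moll_int {h g : Pt 3 → ℂ} (hc : Continuous h) (hs : HasCompactSupport h)
    (hg : LocallyIntegrable g volume) :
    Tendsto (fun n => ∫ x, g x * moll n h x) atTop (𝓝 (∫ x, g x * h x)) := by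
  obtain ⟨M, hM⟩ := hs.exists_bound_of_continuous hc
  have hK : IsCompact (Metric.cthickening 1 (tsupport h)) := hs.isCompact.cthickening
  have hgK := hg.integrableOn_isCompact hK
  refine tendsto_integral_of_dominated_convergence
    ((Metric.cthickening 1 (tsupport h)).indicator fun x => ‖g x‖ * (3 * M)) ?_ ?_ ?_ ?_
  · intro n
    exact hg.aestronglyMeasurable.mul (moll_cont n hc).continuous.aestronglyMeasurable
  · exact (integrable_indicator_iff hK.measurableSet).2 (hgK.norm.mul_const _)
  · intro n
    refine Eventually.of_forall fun x => ?_
    by_cases hx : x ∈ Metric.cthickening 1 (tsupport h)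
    · rw [Set.indicator_of_mem hx, norm_mul]
      gcongr
      exact moll_bound n hc hM x
    · rw [Set.indicator_of_notMem hx, moll_zero n hc hx]; simp
  · exact Eventually.of_forall fun x => (moll_tendsto hc x).const_mul _

lemma moll_test (n : ℕ) {h : Pt 3 → ℂ} (hc : Continuous h) (hs : HasCompactSupport h) :
    IsTest (moll n h) :=
  ⟨moll_cont n hc, HasCompactSupport.intro (hs.isCompact.cthickening (r := 1))
    fun _ hx => moll_zero n hc hx⟩

lemma moll_pd (n : ℕ) {h : Pt 3 → ℂ} (hc : ContDiff ℝ 1 h) (hs : HasCompactSupport h)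
    (j : Fin 3) : pd j (moll n h) = moll n (pd j h) := by
  ext x
  have h1 := hs.hasFDerivAt_convolution_right (ContinuousLinearMap.lsmul ℝ ℝ) (μ := volume)
    (f := (bmp n).normed volume)
    ((bmp n).contDiff_normed (n := 0)).continuous.locallyIntegrable hc x
  unfold pd
  have h2 : HasFDerivAt (moll n h) _ x := h1
  rw [h2.fderiv]
  rw [convolution_precompR_apply _ ((bmp n).contDiff_normed (n := 0)).continuous.locallyIntegrable
    (hs.fderiv ℝ) (hc.continuous_fderiv (by simp))]
  rfl

lemma pd_cs {f : Pt 3 → ℂ} (hs : HasCompactSupport f) (j : Fin 3) :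
    HasCompactSupport (pd j f) := hs.mono' (subset_closure.trans (pd_support j))

/-- test with C1 functions -/
lemma weakPD_C1 {f g : Pt 3 → ℂ} {j : Fin 3} (hf : LocallyIntegrable f volume)
    (hg : LocallyIntegrable g volume) (h : HasWeakPD j f g) {ψ : Pt 3 → ℂ}
    (hc : ContDiff ℝ 1 ψ) (hs : HasCompactSupport ψ) :
    ∫ x, g x * ψ x = -∫ x, f x * pd j ψ x := by
  have t1 := moll_int hc.continuous hs hg
  have t2 := (moll_int (pd_continuous hc j) (pd_cs hs j) hf).neg
  refine tendsto_nhds_unique t1 (t2.congr fun n => ?_)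
  rw [h _ (moll_test n hc.continuous hs), moll_pd n hc hs]

lemma null1 {f gj gk : Pt 3 → ℂ} {j k : Fin 3}
    (hgj : LocallyIntegrable gj volume)
    (hgk : LocallyIntegrable gk volume) (h1 : HasWeakPD j f gj) (h2 : HasWeakPD k f gk)
    {ψ : Pt 3 → ℂ} (hψ : IsTest ψ) :
    ∫ x, gk x * pd j ψ x = ∫ x, gj x * pd k ψ x := by
  rw [h1 _ (hψ.pd k), h2 _ (hψ.pd j)]
  congr 2; ext x
  rw [pd_comm hψ.1]

lemma null1_C1 {f gj gk : Pt 3 → ℂ} {j k : Fin 3}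
    (hgj : LocallyIntegrable gj volume)
    (hgk : LocallyIntegrable gk volume) (h1 : HasWeakPD j f gj) (h2 : HasWeakPD k f gk)
    {ψ : Pt 3 → ℂ} (hc : ContDiff ℝ 1 ψ) (hs : HasCompactSupport ψ) :
    ∫ x, gk x * pd j ψ x = ∫ x, gj x * pd k ψ x := by
  have t1 := moll_int (pd_continuous hc j) (pd_cs hs j) hgk
  have t2 := moll_int (pd_continuous hc k) (pd_cs hs k) hgj
  refine tendsto_nhds_unique t1 (t2.congr fun n => ?_)
  rw [← moll_pd n hc hs, ← moll_pd n hc hs]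
  exact (null1 hgj hgk h1 h2 (moll_test n hc.continuous hs)).symm

/-- Leibniz -/
lemma weakPD_mul {f g φ : Pt 3 → ℂ} {j : Fin 3} (hf : LocallyIntegrable f volume)
    (hg : LocallyIntegrable g volume) (h : HasWeakPD j f g) (hφ : IsTest φ) :
    HasWeakPD j (fun x => f x * φ x) (fun x => f x * pd j φ x + g x * φ x) := by
  intro θ hθ
  have e := h _ (hφ.mul_smooth hθ.1)
  have i1 : Integrable (fun x => f x * (pd j φ x * θ x)) volume :=
    locInt_mul_cc hf ((hφ.pd j).mul_smooth hθ.1).cont ((hφ.pd j).mul_smooth hθ.1).2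
  have i2 : Integrable (fun x => f x * (φ x * pd j θ x)) volume :=
    locInt_mul_cc hf (hφ.mul_smooth (hθ.pd j).1).cont (hφ.mul_smooth (hθ.pd j).1).2
  have i3 : Integrable (fun x => g x * (φ x * θ x)) volume :=
    locInt_mul_cc hg (hφ.mul_smooth hθ.1).cont (hφ.mul_smooth hθ.1).2
  have e2 : ∫ x, f x * pd j (fun x => φ x * θ x) x
      = (∫ x, f x * (pd j φ x * θ x)) + ∫ x, f x * (φ x * pd j θ x) := by
    rw [← integral_add i1 i2]; congr 1; ext x
    rw [pd_mul (smooth_diff hφ.1) (smooth_diff hθ.1)]; ring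
  have e3 : ∫ x, (f x * pd j φ x + g x * φ x) * θ x
      = (∫ x, f x * (pd j φ x * θ x)) + ∫ x, g x * (φ x * θ x) := by
    rw [← integral_add i1 i3]; congr 1; ext x; ring
  rw [e3, e, e2]
  have : ∀ x, f x * φ x * pd j θ x = f x * (φ x * pd j θ x) := fun x => by ring
  simp only [this]; ring

lemma null3 {f gj gk φ a : Pt 3 → ℂ} {j k : Fin 3} (hf : LocallyIntegrable f volume)
    (hgj : LocallyIntegrable gj volume)
    (hgk : LocallyIntegrable gk volume) (h1 : HasWeakPD j f gj) (h2 : HasWeakPD k f gk)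
    (hφ : IsTest φ) (ha : ContDiff ℝ 1 a) :
    ∫ x, pd j a x * (f x * pd k φ x + gk x * φ x)
      = ∫ x, pd k a x * (f x * pd j φ x + gj x * φ x) := by
  obtain ⟨r, hr⟩ := hφ.2.isCompact.isBounded.subset_ball (0 : Pt 3)
  obtain ⟨N, hN⟩ := exists_nat_ge r
  obtain ⟨χ, hχ, hχ1⟩ := exists_cutoff N
  have hsub := hr.trans (Metric.ball_subset_ball hN)
  have li : ∀ {g : Pt 3 → ℂ} (i : Fin 3), LocallyIntegrable g volume →
      LocallyIntegrable (fun x => f x * pd i φ x + g x * φ x) volume := fun i hg =>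
    ((locInt_mul_cc hf (hφ.pd i).cont (hφ.pd i).2).add
      (locInt_mul_cc hg hφ.cont hφ.2)).locallyIntegrable
  have key := null1_C1 (li j hgj) (li k hgk) (weakPD_mul hf hgj h1 hφ) (weakPD_mul hf hgk h2 hφ)
    (ψ := fun x => χ x * a x) ((hχ.1.of_le (by simp)).mul ha) (hχ.2.mul_right)
  have conv : ∀ (i i' : Fin 3) (g : Pt 3 → ℂ) (x : Pt 3),
      pd i a x * (f x * pd i' φ x + g x * φ x)
        = (f x * pd i' φ x + g x * φ x) * pd i (fun x => χ x * a x) x := by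
    intro i i' g x
    by_cases hx : x ∈ tsupport φ
    · have : (fun x => χ x * a x) =ᶠ[𝓝 x] a := by
        filter_upwards [Metric.isOpen_ball.mem_nhds (hsub hx)] with y hy
        rw [hχ1 y hy, one_mul]
      have : pd i (fun x => χ x * a x) x = pd i a x := by
        unfold pd; rw [this.fderiv_eq]
      rw [this]; ring
    · rw [image_eq_zero_of_notMem_tsupport hx,
        image_eq_zero_of_notMem_tsupport (fun h => hx (pd_support i' h))]; simp
  simp only [conv]
  exact key

lemma null2 {f g φ c : Pt 3 → ℂ} {j : Fin 3} (hf : LocallyIntegrable f volume)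
    (hg : LocallyIntegrable g volume) (h : HasWeakPD j f g) (hφ : IsTest φ)
    (hc : ContDiff ℝ 1 c) :
    ∫ x, (c x * pd j φ x * f x + c x * φ x * g x + pd j c x * φ x * f x) = 0 := by
  have hcφ : ContDiff ℝ 1 (fun x => c x * φ x) := hc.mul (hφ.1.of_le (by simp))
  have hs : HasCompactSupport (fun x => c x * φ x) := hφ.2.mul_left
  have e := weakPD_C1 hf hg h hcφ hs
  have i1 := locInt_mul_cc hg hcφ.continuous hs
  have i2 := locInt_mul_cc hf (pd_continuous hcφ j) (pd_cs hs j)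
  have : ∀ x, c x * pd j φ x * f x + c x * φ x * g x + pd j c x * φ x * f x
      = g x * (c x * φ x) + f x * pd j (fun x => c x * φ x) x := by
    intro x
    rw [pd_mul (hc.differentiable (by simp)) (smooth_diff hφ.1)]; ring
  simp only [this]
  rw [integral_add i1 i2, e]; ring

end

section

lemma sumF (f : Finset (Fin 3) → ℂ) : ∑ S : Finset (Fin 3), f S
    = f ∅ + f {0} + f {1} + f {2} + f {0, 1} + f {0, 2} + f {1, 2} + f {0, 1, 2} := by
  have : (univ : Finset (Finset (Fin 3)))
      = {∅, {0}, {1}, {2}, {0, 1}, {0, 2}, {1, 2}, {0, 1, 2}} := by decide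
  rw [this]
  repeat rw [sum_insert (by decide)]
  rw [sum_singleton]
  ring

lemma casesF (p : Finset (Fin 3) → Prop) (h0 : p ∅) (h1 : p {0}) (h2 : p {1}) (h3 : p {2})
    (h4 : p {0, 1}) (h5 : p {0, 2}) (h6 : p {1, 2}) (h7 : p {0, 1, 2}) (S : Finset (Fin 3)) :
    p S := by
  have : S ∈ ({∅, {0}, {1}, {2}, {0, 1}, {0, 2}, {1, 2}, {0, 1, 2}} :
    Finset (Finset (Fin 3))) := by revert S; decide
  simp only [mem_insert, mem_singleton] at this
  rcases this with h | h | h | h | h | h | h | h <;> rw [h] <;> assumption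

lemma oneG_single (A : Fin 3 → ℂ) (j : Fin 3) : oneG A {j} = A j := by
  simp [oneG]

lemma oneG_of_card (A : Fin 3 → ℂ) {S : Finset (Fin 3)} (h : S.card ≠ 1) : oneG A S = 0 := by
  unfold oneG
  refine sum_eq_zero fun j _ => ?_
  rw [if_neg]
  rintro rfl
  simp at h

lemma oneG_add (A B : Fin 3 → ℂ) : oneG (A + B) = oneG A + oneG B := by
  ext S
  simp only [oneG, Pi.add_apply, ← sum_add_distrib]
  refine sum_congr rfl fun j _ => ?_
  split_ifs <;> simp

lemma dxe_eq (j : Fin 3) : dxe j = oneG (Pi.single j 1) := by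
  ext S
  simp only [dxe, oneG]
  by_cases h : S.card = 1
  · obtain ⟨k, rfl⟩ := card_eq_one.1 h
    simp [Pi.single_apply, eq_comm]
  · rw [if_neg (by rintro rfl; simp at h)]
    symm
    refine sum_eq_zero fun k _ => ?_
    rw [if_neg]
    rintro rfl; simp at h

/-- wedge with a one-form -/
lemma wedge_one (A : Fin 3 → ℂ) (u : GF 3) (S : Finset (Fin 3)) :
    wedge (oneG A) u S = ∑ j ∈ S, msgn {j} (S \ {j}) * A j * u (S \ {j}) := by
  unfold wedge
  have h2 : ∑ I ∈ S.powerset, msgn I (S \ I) * oneG A I * u (S \ I)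
      = ∑ I ∈ S.map ⟨fun j => ({j} : Finset (Fin 3)), singleton_injective⟩,
        msgn I (S \ I) * oneG A I * u (S \ I) := by
    symm
    refine sum_subset ?_ ?_
    · intro I hI
      simp only [mem_map, Function.Embedding.coeFn_mk] at hI
      obtain ⟨j, hj, rfl⟩ := hI
      simpa using hj
    · intro I hI hI'
      rw [oneG_of_card]; · ring
      intro hc
      obtain ⟨j, rfl⟩ := card_eq_one.1 hc
      apply hI'
      simpa using hI
  rw [h2, sum_map]
  refine sum_congr rfl fun j _ => ?_
  simp only [Function.Embedding.coeFn_mk, oneG_single]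

lemma vee_one (A : Fin 3 → ℂ) (u : GF 3) (S : Finset (Fin 3)) :
    vee (oneG A) u S = ∑ j ∈ univ \ S, msgn S {j} * A j * u (S ∪ {j}) := by
  unfold vee
  have h2 : ∑ I ∈ (univ \ S).powerset, msgn S I * oneG A I * u (S ∪ I)
      = ∑ I ∈ (univ \ S).map ⟨fun j => ({j} : Finset (Fin 3)), singleton_injective⟩,
        msgn S I * oneG A I * u (S ∪ I) := by
    symm
    refine sum_subset ?_ ?_
    · intro I hI
      simp only [mem_map, Function.Embedding.coeFn_mk] at hI
      obtain ⟨j, hj, rfl⟩ := hI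
      simpa using hj
    · intro I hI hI'
      rw [oneG_of_card]; · ring
      intro hc
      obtain ⟨j, rfl⟩ := card_eq_one.1 hc
      apply hI'
      simpa using hI
  rw [h2, sum_map]
  refine sum_congr rfl fun j _ => ?_
  simp only [Function.Embedding.coeFn_mk, oneG_single]

lemma msgn_even {I J : Finset (Fin 3)}
    (h : Even (((I ×ˢ J).filter fun p => p.2 < p.1).card)) : msgn I J = 1 := h.neg_one_pow

lemma msgn_odd {I J : Finset (Fin 3)}
    (h : Odd (((I ×ˢ J).filter fun p => p.2 < p.1).card)) : msgn I J = -1 := h.neg_one_pow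

lemma wedge_e (A : Fin 3 → ℂ) (u : GF 3) : wedge (oneG A) u ∅ = 0 := by
  rw [wedge_one]
  simp

lemma vee_e (A : Fin 3 → ℂ) (u : GF 3) : vee (oneG A) u ∅ = A 0 * u {0} + A 1 * u {1} + A 2 * u {2} := by
  rw [vee_one]
  rw [show univ \ (∅ : Finset (Fin 3)) = {0, 1, 2} by decide]
  rw [sum_insert (by decide)]
  rw [sum_insert (by decide)]
  rw [sum_singleton]
  rw [show (∅ : Finset (Fin 3)) ∪ {0} = {0} by decide]
  rw [show (∅ : Finset (Fin 3)) ∪ {1} = {1} by decide]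
  rw [show (∅ : Finset (Fin 3)) ∪ {2} = {2} by decide]
  rw [msgn_even (I := ∅) (J := {0}) (by decide)]
  rw [msgn_even (I := ∅) (J := {1}) (by decide)]
  rw [msgn_even (I := ∅) (J := {2}) (by decide)]
  ring

lemma wedge_0 (A : Fin 3 → ℂ) (u : GF 3) : wedge (oneG A) u {0} = A 0 * u ∅ := by
  rw [wedge_one]
  rw [sum_singleton]
  rw [show ({0} : Finset (Fin 3)) \ {0} = ∅ by decide]
  rw [msgn_even (I := {0}) (J := ∅) (by decide)]
  ring

lemma vee_0 (A : Fin 3 → ℂ) (u : GF 3) : vee (oneG A) u {0} = A 1 * u {0, 1} + A 2 * u {0, 2} := by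
  rw [vee_one]
  rw [show univ \ ({0} : Finset (Fin 3)) = {1, 2} by decide]
  rw [sum_insert (by decide)]
  rw [sum_singleton]
  rw [show ({0} : Finset (Fin 3)) ∪ {1} = {0, 1} by decide]
  rw [show ({0} : Finset (Fin 3)) ∪ {2} = {0, 2} by decide]
  rw [msgn_even (I := {0}) (J := {1}) (by decide)]
  rw [msgn_even (I := {0}) (J := {2}) (by decide)]
  ring

lemma wedge_1 (A : Fin 3 → ℂ) (u : GF 3) : wedge (oneG A) u {1} = A 1 * u ∅ := by
  rw [wedge_one]
  rw [sum_singleton]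
  rw [show ({1} : Finset (Fin 3)) \ {1} = ∅ by decide]
  rw [msgn_even (I := {1}) (J := ∅) (by decide)]
  ring

lemma vee_1 (A : Fin 3 → ℂ) (u : GF 3) : vee (oneG A) u {1} = -(A 0 * u {0, 1}) + A 2 * u {1, 2} := by
  rw [vee_one]
  rw [show univ \ ({1} : Finset (Fin 3)) = {0, 2} by decide]
  rw [sum_insert (by decide)]
  rw [sum_singleton]
  rw [show ({1} : Finset (Fin 3)) ∪ {0} = {0, 1} by decide]
  rw [show ({1} : Finset (Fin 3)) ∪ {2} = {1, 2} by decide]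
  rw [msgn_odd (I := {1}) (J := {0}) (by decide)]
  rw [msgn_even (I := {1}) (J := {2}) (by decide)]
  ring

lemma wedge_2 (A : Fin 3 → ℂ) (u : GF 3) : wedge (oneG A) u {2} = A 2 * u ∅ := by
  rw [wedge_one]
  rw [sum_singleton]
  rw [show ({2} : Finset (Fin 3)) \ {2} = ∅ by decide]
  rw [msgn_even (I := {2}) (J := ∅) (by decide)]
  ring

lemma vee_2 (A : Fin 3 → ℂ) (u : GF 3) : vee (oneG A) u {2} = -(A 0 * u {0, 2}) - A 1 * u {1, 2} := by
  rw [vee_one]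
  rw [show univ \ ({2} : Finset (Fin 3)) = {0, 1} by decide]
  rw [sum_insert (by decide)]
  rw [sum_singleton]
  rw [show ({2} : Finset (Fin 3)) ∪ {0} = {0, 2} by decide]
  rw [show ({2} : Finset (Fin 3)) ∪ {1} = {1, 2} by decide]
  rw [msgn_odd (I := {2}) (J := {0}) (by decide)]
  rw [msgn_odd (I := {2}) (J := {1}) (by decide)]
  ring

lemma wedge_01 (A : Fin 3 → ℂ) (u : GF 3) : wedge (oneG A) u {0, 1} = A 0 * u {1} - A 1 * u {0} := by
  rw [wedge_one]
  rw [sum_insert (by decide)]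
  rw [sum_singleton]
  rw [show ({0, 1} : Finset (Fin 3)) \ {0} = {1} by decide]
  rw [show ({0, 1} : Finset (Fin 3)) \ {1} = {0} by decide]
  rw [msgn_even (I := {0}) (J := {1}) (by decide)]
  rw [msgn_odd (I := {1}) (J := {0}) (by decide)]
  ring

lemma vee_01 (A : Fin 3 → ℂ) (u : GF 3) : vee (oneG A) u {0, 1} = A 2 * u {0, 1, 2} := by
  rw [vee_one]
  rw [show univ \ ({0, 1} : Finset (Fin 3)) = {2} by decide]
  rw [sum_singleton]
  rw [show ({0, 1} : Finset (Fin 3)) ∪ {2} = {0, 1, 2} by decide]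
  rw [msgn_even (I := {0, 1}) (J := {2}) (by decide)]
  ring

lemma wedge_02 (A : Fin 3 → ℂ) (u : GF 3) : wedge (oneG A) u {0, 2} = A 0 * u {2} - A 2 * u {0} := by
  rw [wedge_one]
  rw [sum_insert (by decide)]
  rw [sum_singleton]
  rw [show ({0, 2} : Finset (Fin 3)) \ {0} = {2} by decide]
  rw [show ({0, 2} : Finset (Fin 3)) \ {2} = {0} by decide]
  rw [msgn_even (I := {0}) (J := {2}) (by decide)]
  rw [msgn_odd (I := {2}) (J := {0}) (by decide)]
  ring

lemma vee_02 (A : Fin 3 → ℂ) (u : GF 3) : vee (oneG A) u {0, 2} = -(A 1 * u {0, 1, 2}) := by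
  rw [vee_one]
  rw [show univ \ ({0, 2} : Finset (Fin 3)) = {1} by decide]
  rw [sum_singleton]
  rw [show ({0, 2} : Finset (Fin 3)) ∪ {1} = {0, 1, 2} by decide]
  rw [msgn_odd (I := {0, 2}) (J := {1}) (by decide)]
  ring

lemma wedge_12 (A : Fin 3 → ℂ) (u : GF 3) : wedge (oneG A) u {1, 2} = A 1 * u {2} - A 2 * u {1} := by
  rw [wedge_one]
  rw [sum_insert (by decide)]
  rw [sum_singleton]
  rw [show ({1, 2} : Finset (Fin 3)) \ {1} = {2} by decide]
  rw [show ({1, 2} : Finset (Fin 3)) \ {2} = {1} by decide]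
  rw [msgn_even (I := {1}) (J := {2}) (by decide)]
  rw [msgn_odd (I := {2}) (J := {1}) (by decide)]
  ring

lemma vee_12 (A : Fin 3 → ℂ) (u : GF 3) : vee (oneG A) u {1, 2} = A 0 * u {0, 1, 2} := by
  rw [vee_one]
  rw [show univ \ ({1, 2} : Finset (Fin 3)) = {0} by decide]
  rw [sum_singleton]
  rw [show ({1, 2} : Finset (Fin 3)) ∪ {0} = {0, 1, 2} by decide]
  rw [msgn_even (I := {1, 2}) (J := {0}) (by decide)]
  ring

lemma wedge_012 (A : Fin 3 → ℂ) (u : GF 3) : wedge (oneG A) u {0, 1, 2} = A 0 * u {1, 2} - A 1 * u {0, 2} + A 2 * u {0, 1} := by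
  rw [wedge_one]
  rw [sum_insert (by decide)]
  rw [sum_insert (by decide)]
  rw [sum_singleton]
  rw [show ({0, 1, 2} : Finset (Fin 3)) \ {0} = {1, 2} by decide]
  rw [show ({0, 1, 2} : Finset (Fin 3)) \ {1} = {0, 2} by decide]
  rw [show ({0, 1, 2} : Finset (Fin 3)) \ {2} = {0, 1} by decide]
  rw [msgn_even (I := {0}) (J := {1, 2}) (by decide)]
  rw [msgn_odd (I := {1}) (J := {0, 2}) (by decide)]
  rw [msgn_even (I := {2}) (J := {0, 1}) (by decide)]
  ring

lemma vee_012 (A : Fin 3 → ℂ) (u : GF 3) : vee (oneG A) u {0, 1, 2} = 0 := by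
  rw [vee_one]
  rw [show univ \ ({0, 1, 2} : Finset (Fin 3)) = ∅ by decide]
  simp

lemma card_e : (∅ : Finset (Fin 3)).card = 0 := by decide
lemma card_0 : ({0} : Finset (Fin 3)).card = 1 := by decide
lemma card_1 : ({1} : Finset (Fin 3)).card = 1 := by decide
lemma card_2 : ({2} : Finset (Fin 3)).card = 1 := by decide
lemma card_01 : ({0, 1} : Finset (Fin 3)).card = 2 := by decide
lemma card_02 : ({0, 2} : Finset (Fin 3)).card = 2 := by decide
lemma card_12 : ({1, 2} : Finset (Fin 3)).card = 2 := by decide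
lemma card_012 : ({0, 1, 2} : Finset (Fin 3)).card = 3 := by decide

end

section

lemma gd_e (D : Fin 3 → GF 3) : gd D ∅ = 0 := by
  simp [gd, Fin.sum_univ_three, dxe_eq, wedge_e]

lemma gdel_e (D : Fin 3 → GF 3) : gdel D ∅ = -(D 0 {0}) - D 1 {1} - D 2 {2} := by
  simp only [gdel, card_e]
  simp [Fin.sum_univ_three, dxe_eq, vee_e] <;> ring

lemma gd_0 (D : Fin 3 → GF 3) : gd D {0} = D 0 ∅ := by
  simp [gd, Fin.sum_univ_three, dxe_eq, wedge_0] <;> ring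

lemma gdel_0 (D : Fin 3 → GF 3) : gdel D {0} = D 1 {0, 1} + D 2 {0, 2} := by
  simp only [gdel, card_0]
  simp [Fin.sum_univ_three, dxe_eq, vee_0] <;> ring

lemma gd_1 (D : Fin 3 → GF 3) : gd D {1} = D 1 ∅ := by
  simp [gd, Fin.sum_univ_three, dxe_eq, wedge_1] <;> ring

lemma gdel_1 (D : Fin 3 → GF 3) : gdel D {1} = -(D 0 {0, 1}) + D 2 {1, 2} := by
  simp only [gdel, card_1]
  simp [Fin.sum_univ_three, dxe_eq, vee_1] <;> ring

lemma gd_2 (D : Fin 3 → GF 3) : gd D {2} = D 2 ∅ := by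
  simp [gd, Fin.sum_univ_three, dxe_eq, wedge_2] <;> ring

lemma gdel_2 (D : Fin 3 → GF 3) : gdel D {2} = -(D 0 {0, 2}) - D 1 {1, 2} := by
  simp only [gdel, card_2]
  simp [Fin.sum_univ_three, dxe_eq, vee_2] <;> ring

lemma gd_01 (D : Fin 3 → GF 3) : gd D {0, 1} = D 0 {1} - D 1 {0} := by
  simp [gd, Fin.sum_univ_three, dxe_eq, wedge_01] <;> ring

lemma gdel_01 (D : Fin 3 → GF 3) : gdel D {0, 1} = -(D 2 {0, 1, 2}) := by
  simp only [gdel, card_01]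
  simp [Fin.sum_univ_three, dxe_eq, vee_01] <;> ring

lemma gd_02 (D : Fin 3 → GF 3) : gd D {0, 2} = D 0 {2} - D 2 {0} := by
  simp [gd, Fin.sum_univ_three, dxe_eq, wedge_02] <;> ring

lemma gdel_02 (D : Fin 3 → GF 3) : gdel D {0, 2} = D 1 {0, 1, 2} := by
  simp only [gdel, card_02]
  simp [Fin.sum_univ_three, dxe_eq, vee_02] <;> ring

lemma gd_12 (D : Fin 3 → GF 3) : gd D {1, 2} = D 1 {2} - D 2 {1} := by
  simp [gd, Fin.sum_univ_three, dxe_eq, wedge_12] <;> ring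

lemma gdel_12 (D : Fin 3 → GF 3) : gdel D {1, 2} = -(D 0 {0, 1, 2}) := by
  simp only [gdel, card_12]
  simp [Fin.sum_univ_three, dxe_eq, vee_12] <;> ring

lemma gd_012 (D : Fin 3 → GF 3) : gd D {0, 1, 2} = D 0 {1, 2} - D 1 {0, 2} + D 2 {0, 1} := by
  simp [gd, Fin.sum_univ_three, dxe_eq, wedge_012] <;> ring

lemma gdel_012 (D : Fin 3 → GF 3) : gdel D {0, 1, 2} = 0 := by
  simp only [gdel, card_012]
  simp [Fin.sum_univ_three, dxe_eq, vee_012]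

end

section

lemma proj_e (l : ℕ) (u : GF 3) : proj l u ∅ = if 0 = l then u ∅ else 0 := rfl

lemma proj_0 (l : ℕ) (u : GF 3) : proj l u {0} = if 1 = l then u {0} else 0 := rfl

lemma proj_1 (l : ℕ) (u : GF 3) : proj l u {1} = if 1 = l then u {1} else 0 := rfl

lemma proj_2 (l : ℕ) (u : GF 3) : proj l u {2} = if 1 = l then u {2} else 0 := rfl

lemma proj_01 (l : ℕ) (u : GF 3) : proj l u {0, 1} = if 2 = l then u {0, 1} else 0 := rfl

lemma proj_02 (l : ℕ) (u : GF 3) : proj l u {0, 2} = if 2 = l then u {0, 2} else 0 := rfl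

lemma proj_12 (l : ℕ) (u : GF 3) : proj l u {1, 2} = if 2 = l then u {1, 2} else 0 := rfl

lemma proj_012 (l : ℕ) (u : GF 3) : proj l u {0, 1, 2} = if 3 = l then u {0, 1, 2} else 0 := rfl

lemma alt_e (u : GF 3) : altSign u ∅ = u ∅ := by
  simp only [altSign, card_e] <;> ring

lemma alt_0 (u : GF 3) : altSign u {0} = -u {0} := by
  simp only [altSign, card_0] <;> ring

lemma alt_1 (u : GF 3) : altSign u {1} = -u {1} := by
  simp only [altSign, card_1] <;> ring

lemma alt_2 (u : GF 3) : altSign u {2} = -u {2} := by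
  simp only [altSign, card_2] <;> ring

lemma alt_01 (u : GF 3) : altSign u {0, 1} = u {0, 1} := by
  simp only [altSign, card_01] <;> ring

lemma alt_02 (u : GF 3) : altSign u {0, 2} = u {0, 2} := by
  simp only [altSign, card_02] <;> ring

lemma alt_12 (u : GF 3) : altSign u {1, 2} = u {1, 2} := by
  simp only [altSign, card_12] <;> ring

lemma alt_012 (u : GF 3) : altSign u {0, 1, 2} = -u {0, 1, 2} := by
  simp only [altSign, card_012] <;> ring

lemma P0_e (A B : Fin 3 → ℂ) (c : ℂ) (v : GF 3) : P0 (oneG A) (oneG B) c v ∅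
    = A 0 * v {0} + A 1 * v {1} + A 2 * v {2} + c * v ∅ := by
  simp [P0, wedge_e, vee_e, proj_e, proj_0, proj_1, proj_2, proj_01, proj_02, proj_12, proj_012] <;> ring

lemma P0t_e (A B : Fin 3 → ℂ) (c : ℂ) (v : GF 3) : P0t (oneG A) (oneG B) c v ∅
    = B 0 * v {0} + B 1 * v {1} + B 2 * v {2} + c * v ∅ := by
  simp [P0t, wedge_e, vee_e, proj_e, proj_0, proj_1, proj_2, proj_01, proj_02, proj_12, proj_012] <;> ring

lemma P0_0 (A B : Fin 3 → ℂ) (c : ℂ) (v : GF 3) : P0 (oneG A) (oneG B) c v {0}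
    = B 0 * v ∅ - B 1 * v {0, 1} - B 2 * v {0, 2} + c * v {0} := by
  simp [P0, wedge_0, vee_0, proj_e, proj_0, proj_1, proj_2, proj_01, proj_02, proj_12, proj_012] <;> ring

lemma P0t_0 (A B : Fin 3 → ℂ) (c : ℂ) (v : GF 3) : P0t (oneG A) (oneG B) c v {0}
    = A 0 * v ∅ - A 1 * v {0, 1} - A 2 * v {0, 2} + c * v {0} := by
  simp [P0t, wedge_0, vee_0, proj_e, proj_0, proj_1, proj_2, proj_01, proj_02, proj_12, proj_012] <;> ring

lemma P0_1 (A B : Fin 3 → ℂ) (c : ℂ) (v : GF 3) : P0 (oneG A) (oneG B) c v {1}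
    = B 0 * v {0, 1} + B 1 * v ∅ - B 2 * v {1, 2} + c * v {1} := by
  simp [P0, wedge_1, vee_1, proj_e, proj_0, proj_1, proj_2, proj_01, proj_02, proj_12, proj_012] <;> ring

lemma P0t_1 (A B : Fin 3 → ℂ) (c : ℂ) (v : GF 3) : P0t (oneG A) (oneG B) c v {1}
    = A 0 * v {0, 1} + A 1 * v ∅ - A 2 * v {1, 2} + c * v {1} := by
  simp [P0t, wedge_1, vee_1, proj_e, proj_0, proj_1, proj_2, proj_01, proj_02, proj_12, proj_012] <;> ring

lemma P0_2 (A B : Fin 3 → ℂ) (c : ℂ) (v : GF 3) : P0 (oneG A) (oneG B) c v {2}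
    = B 0 * v {0, 2} + B 1 * v {1, 2} + B 2 * v ∅ + c * v {2} := by
  simp [P0, wedge_2, vee_2, proj_e, proj_0, proj_1, proj_2, proj_01, proj_02, proj_12, proj_012] <;> ring

lemma P0t_2 (A B : Fin 3 → ℂ) (c : ℂ) (v : GF 3) : P0t (oneG A) (oneG B) c v {2}
    = A 0 * v {0, 2} + A 1 * v {1, 2} + A 2 * v ∅ + c * v {2} := by
  simp [P0t, wedge_2, vee_2, proj_e, proj_0, proj_1, proj_2, proj_01, proj_02, proj_12, proj_012] <;> ring

lemma P0_01 (A B : Fin 3 → ℂ) (c : ℂ) (v : GF 3) : P0 (oneG A) (oneG B) c v {0, 1}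
    = A 0 * v {1} - A 1 * v {0} + A 2 * v {0, 1, 2} + c * v {0, 1} := by
  simp [P0, wedge_01, vee_01, proj_e, proj_0, proj_1, proj_2, proj_01, proj_02, proj_12, proj_012] <;> ring

lemma P0t_01 (A B : Fin 3 → ℂ) (c : ℂ) (v : GF 3) : P0t (oneG A) (oneG B) c v {0, 1}
    = B 0 * v {1} - B 1 * v {0} + B 2 * v {0, 1, 2} + c * v {0, 1} := by
  simp [P0t, wedge_01, vee_01, proj_e, proj_0, proj_1, proj_2, proj_01, proj_02, proj_12, proj_012] <;> ring

lemma P0_02 (A B : Fin 3 → ℂ) (c : ℂ) (v : GF 3) : P0 (oneG A) (oneG B) c v {0, 2}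
    = A 0 * v {2} - A 1 * v {0, 1, 2} - A 2 * v {0} + c * v {0, 2} := by
  simp [P0, wedge_02, vee_02, proj_e, proj_0, proj_1, proj_2, proj_01, proj_02, proj_12, proj_012] <;> ring

lemma P0t_02 (A B : Fin 3 → ℂ) (c : ℂ) (v : GF 3) : P0t (oneG A) (oneG B) c v {0, 2}
    = B 0 * v {2} - B 1 * v {0, 1, 2} - B 2 * v {0} + c * v {0, 2} := by
  simp [P0t, wedge_02, vee_02, proj_e, proj_0, proj_1, proj_2, proj_01, proj_02, proj_12, proj_012] <;> ring

lemma P0_12 (A B : Fin 3 → ℂ) (c : ℂ) (v : GF 3) : P0 (oneG A) (oneG B) c v {1, 2}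
    = A 0 * v {0, 1, 2} + A 1 * v {2} - A 2 * v {1} + c * v {1, 2} := by
  simp [P0, wedge_12, vee_12, proj_e, proj_0, proj_1, proj_2, proj_01, proj_02, proj_12, proj_012] <;> ring

lemma P0t_12 (A B : Fin 3 → ℂ) (c : ℂ) (v : GF 3) : P0t (oneG A) (oneG B) c v {1, 2}
    = B 0 * v {0, 1, 2} + B 1 * v {2} - B 2 * v {1} + c * v {1, 2} := by
  simp [P0t, wedge_12, vee_12, proj_e, proj_0, proj_1, proj_2, proj_01, proj_02, proj_12, proj_012] <;> ring

lemma P0_012 (A B : Fin 3 → ℂ) (c : ℂ) (v : GF 3) : P0 (oneG A) (oneG B) c v {0, 1, 2}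
    = B 0 * v {1, 2} - B 1 * v {0, 2} + B 2 * v {0, 1} + c * v {0, 1, 2} := by
  simp [P0, wedge_012, vee_012, proj_e, proj_0, proj_1, proj_2, proj_01, proj_02, proj_12, proj_012] <;> ring

lemma P0t_012 (A B : Fin 3 → ℂ) (c : ℂ) (v : GF 3) : P0t (oneG A) (oneG B) c v {0, 1, 2}
    = A 0 * v {1, 2} - A 1 * v {0, 2} + A 2 * v {0, 1} + c * v {0, 1, 2} := by
  simp [P0t, wedge_012, vee_012, proj_e, proj_0, proj_1, proj_2, proj_01, proj_02, proj_12, proj_012] <;> ring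

lemma Pf_e (A B : Fin 3 → ℂ) (c : ℂ) (D : Fin 3 → GF 3) (v : GF 3) :
    Pfull (oneG A) (oneG B) c D v ∅
    = A 0 * v {0} + A 1 * v {1} + A 2 * v {2} + c * v ∅ + D 0 {0} + D 1 {1} + D 2 {2} := by
  simp only [Pfull, Pi.add_apply, gd_e, gdel_e, P0_e, alt_e, alt_0, alt_1, alt_2, alt_01, alt_02, alt_12, alt_012] <;> ring

lemma Pf_0 (A B : Fin 3 → ℂ) (c : ℂ) (D : Fin 3 → GF 3) (v : GF 3) :
    Pfull (oneG A) (oneG B) c D v {0}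
    = B 0 * v ∅ - B 1 * v {0, 1} - B 2 * v {0, 2} + c * v {0} + D 0 ∅ + D 1 {0, 1} + D 2 {0, 2} := by
  simp only [Pfull, Pi.add_apply, gd_0, gdel_0, P0_0, alt_e, alt_0, alt_1, alt_2, alt_01, alt_02, alt_12, alt_012] <;> ring

lemma Pf_1 (A B : Fin 3 → ℂ) (c : ℂ) (D : Fin 3 → GF 3) (v : GF 3) :
    Pfull (oneG A) (oneG B) c D v {1}
    = B 0 * v {0, 1} + B 1 * v ∅ - B 2 * v {1, 2} + c * v {1} - D 0 {0, 1} + D 1 ∅ + D 2 {1, 2} := by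
  simp only [Pfull, Pi.add_apply, gd_1, gdel_1, P0_1, alt_e, alt_0, alt_1, alt_2, alt_01, alt_02, alt_12, alt_012] <;> ring

lemma Pf_2 (A B : Fin 3 → ℂ) (c : ℂ) (D : Fin 3 → GF 3) (v : GF 3) :
    Pfull (oneG A) (oneG B) c D v {2}
    = B 0 * v {0, 2} + B 1 * v {1, 2} + B 2 * v ∅ + c * v {2} - D 0 {0, 2} - D 1 {1, 2} + D 2 ∅ := by
  simp only [Pfull, Pi.add_apply, gd_2, gdel_2, P0_2, alt_e, alt_0, alt_1, alt_2, alt_01, alt_02, alt_12, alt_012] <;> ring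

lemma Pf_01 (A B : Fin 3 → ℂ) (c : ℂ) (D : Fin 3 → GF 3) (v : GF 3) :
    Pfull (oneG A) (oneG B) c D v {0, 1}
    = A 0 * v {1} - A 1 * v {0} + A 2 * v {0, 1, 2} + c * v {0, 1} - D 0 {1} + D 1 {0} + D 2 {0, 1, 2} := by
  simp only [Pfull, Pi.add_apply, gd_01, gdel_01, P0_01, alt_e, alt_0, alt_1, alt_2, alt_01, alt_02, alt_12, alt_012] <;> ring

lemma Pf_02 (A B : Fin 3 → ℂ) (c : ℂ) (D : Fin 3 → GF 3) (v : GF 3) :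
    Pfull (oneG A) (oneG B) c D v {0, 2}
    = A 0 * v {2} - A 1 * v {0, 1, 2} - A 2 * v {0} + c * v {0, 2} - D 0 {2} - D 1 {0, 1, 2} + D 2 {0} := by
  simp only [Pfull, Pi.add_apply, gd_02, gdel_02, P0_02, alt_e, alt_0, alt_1, alt_2, alt_01, alt_02, alt_12, alt_012] <;> ring

lemma Pf_12 (A B : Fin 3 → ℂ) (c : ℂ) (D : Fin 3 → GF 3) (v : GF 3) :
    Pfull (oneG A) (oneG B) c D v {1, 2}
    = A 0 * v {0, 1, 2} + A 1 * v {2} - A 2 * v {1} + c * v {1, 2} + D 0 {0, 1, 2} - D 1 {2} + D 2 {1} := by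
  simp only [Pfull, Pi.add_apply, gd_12, gdel_12, P0_12, alt_e, alt_0, alt_1, alt_2, alt_01, alt_02, alt_12, alt_012] <;> ring

lemma Pf_012 (A B : Fin 3 → ℂ) (c : ℂ) (D : Fin 3 → GF 3) (v : GF 3) :
    Pfull (oneG A) (oneG B) c D v {0, 1, 2}
    = B 0 * v {1, 2} - B 1 * v {0, 2} + B 2 * v {0, 1} + c * v {0, 1, 2} + D 0 {1, 2} - D 1 {0, 2} + D 2 {0, 1} := by
  simp only [Pfull, Pi.add_apply, gd_012, gdel_012, P0_012, alt_e, alt_0, alt_1, alt_2, alt_01, alt_02, alt_12, alt_012] <;> ring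

end

section

def n1 (D E : Fin 3 → GF 3) (j k : Fin 3) (S T : Finset (Fin 3)) : ℂ :=
  D k S * E j T - D j S * E k T

def n2 (c : ℂ) (A B : Fin 3 → ℂ) (w p : GF 3) (D E : Fin 3 → GF 3) (j : Fin 3)
    (S T : Finset (Fin 3)) : ℂ :=
  c * E j T * w S + c * p T * D j S + (c * (A j + B j)) * p T * w S

def n3 (A : Fin 3 → ℂ) (w p : GF 3) (D E : Fin 3 → GF 3) (j k : Fin 3)
    (S T : Finset (Fin 3)) : ℂ :=
  A j * (w S * E k T + D k S * p T) - A k * (w S * E j T + D j S * p T)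

def NT (A B : Fin 3 → ℂ) (c : ℂ) (w p : GF 3) (D E : Fin 3 → GF 3) : ℂ :=
    (n2 c A B w p D E 0 ∅ {0}
    + n2 c A B w p D E 1 ∅ {1}
    + n2 c A B w p D E 2 ∅ {2}
    + n3 B w p D E 0 1 ∅ {0, 1}
    + n3 B w p D E 0 2 ∅ {0, 2}
    + n3 B w p D E 1 2 ∅ {1, 2}
    + n2 c A B w p D E 0 {0} ∅
    + n2 c A B w p D E 1 {0} {0, 1}
    + n2 c A B w p D E 2 {0} {0, 2}
    + n2 c A B w p D E 1 {1} ∅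
    + n2 c A B w p D E 2 {1} {1, 2}
    + n1 D E 0 2 {1} {0, 1, 2}
    + n3 A w p D E 0 2 {1} {0, 1, 2}
    + n2 c A B w p D E 2 {2} ∅
    + n1 D E 0 1 {0, 1} ∅
    + n3 B w p D E 0 1 {0, 1} ∅
    + n2 c A B w p D E 1 {0, 1} {0}
    + n2 c A B w p D E 2 {0, 1} {0, 1, 2}
    + n1 D E 0 2 {0, 2} ∅
    + n3 B w p D E 0 2 {0, 2} ∅
    + n2 c A B w p D E 2 {0, 2} {0}
    + n1 D E 1 2 {1, 2} ∅
    + n3 B w p D E 1 2 {1, 2} ∅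
    + n2 c A B w p D E 2 {1, 2} {1}
    + n2 c A B w p D E 0 {1, 2} {0, 1, 2}
    + n1 D E 1 2 {0, 1, 2} {0}
    + n3 A w p D E 0 2 {0, 1, 2} {1}
    + n1 D E 0 1 {0, 1, 2} {2}
    + n2 c A B w p D E 2 {0, 1, 2} {0, 1}
    + n2 c A B w p D E 0 {0, 1, 2} {1, 2})
    - (n1 D E 0 1 ∅ {0, 1}
    + n1 D E 0 2 ∅ {0, 2}
    + n1 D E 1 2 ∅ {1, 2}
    + n1 D E 1 2 {0} {0, 1, 2}
    + n3 A w p D E 1 2 {0} {0, 1, 2}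
    + n2 c A B w p D E 0 {1} {0, 1}
    + n2 c A B w p D E 0 {2} {0, 2}
    + n2 c A B w p D E 1 {2} {1, 2}
    + n1 D E 0 1 {2} {0, 1, 2}
    + n3 A w p D E 0 1 {2} {0, 1, 2}
    + n2 c A B w p D E 0 {0, 1} {1}
    + n2 c A B w p D E 0 {0, 2} {2}
    + n2 c A B w p D E 1 {0, 2} {0, 1, 2}
    + n2 c A B w p D E 1 {1, 2} {2}
    + n3 A w p D E 1 2 {0, 1, 2} {0}
    + n1 D E 0 2 {0, 1, 2} {1}
    + n3 A w p D E 0 1 {0, 1, 2} {2}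
    + n2 c A B w p D E 1 {0, 1, 2} {0, 2})

/-- the left-hand side integrand -/
def I1 (A B : Fin 3 → ℂ) (c : ℂ) (w p : GF 3) (D E : Fin 3 → GF 3) : ℂ :=
  ginner (-altSign (Pfull (oneG A) (oneG B) c D w)) (gd E + gdel E)
    + ginner (P0t (oneG A) (oneG B) c (Pfull (oneG A) (oneG B) c D w)) p

/-- first and zeroth order contributions -/
def I2 (A B : Fin 3 → ℂ) (c : ℂ) (w p : GF 3) (D E : Fin 3 → GF 3) : ℂ :=
  ginner (gdel D) (gdel E) + ginner (gd D) (gd E) + c * c * ginner w p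
  + (ginner ((-2 : ℂ) • vee (oneG fun j => c * (A j + B j)) (proj 2 w)
      + (2 : ℂ) • wedge (oneG fun j => c * (A j + B j)) (proj 1 w)) p)
  + (ginner (oneG B) (oneG B) * ginner (proj 0 w + proj 2 w) (proj 0 p + proj 2 p)
      + ginner (oneG A) (oneG A) * ginner (proj 1 w + proj 3 w) (proj 1 p + proj 3 p))
  + ((∑ j, B j *
        (ginner (proj 0 (D j) - proj 2 (D j)) (proj 0 p + proj 2 p)
          + ginner (proj 0 w - proj 2 w) (proj 0 (E j) + proj 2 (E j))))
      + ∑ j, A j *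
        (ginner (proj 3 (D j) - proj 1 (D j)) (proj 1 p + proj 3 p)
          + ginner (proj 3 w - proj 1 w) (proj 1 (E j) + proj 3 (E j))))
  - (dstarPair A (fun j => w {j}) (fun j => p {j}) (fun j k => D j {k}) (fun j k => E j {k}))
  - (dstarPair B (star2 w) (star2 p) (fun j k => star2 (D j) k) (fun j k => star2 (E j) k))

lemma oneG_c0 (A : Fin 3 → ℂ) : oneG A {0} = A 0 := oneG_single A 0
lemma oneG_c1 (A : Fin 3 → ℂ) : oneG A {1} = A 1 := oneG_single A 1
lemma oneG_c2 (A : Fin 3 → ℂ) : oneG A {2} = A 2 := oneG_single A 2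
lemma oneG_ce (A : Fin 3 → ℂ) : oneG A ∅ = 0 := oneG_of_card A (by decide)
lemma oneG_c01 (A : Fin 3 → ℂ) : oneG A {0, 1} = 0 := oneG_of_card A (by decide)
lemma oneG_c02 (A : Fin 3 → ℂ) : oneG A {0, 2} = 0 := oneG_of_card A (by decide)
lemma oneG_c12 (A : Fin 3 → ℂ) : oneG A {1, 2} = 0 := oneG_of_card A (by decide)
lemma oneG_c012 (A : Fin 3 → ℂ) : oneG A {0, 1, 2} = 0 := oneG_of_card A (by decide)

lemma star2_0 (u : GF 3) : star2 u 0 = u {1, 2} := by simp [star2]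
lemma star2_1 (u : GF 3) : star2 u 1 = -u {0, 2} := by simp [star2]
lemma star2_2 (u : GF 3) : star2 u 2 = u {0, 1} := by simp [star2]

set_option maxHeartbeats 4000000 in
set_option maxRecDepth 100000 in
lemma alg_id (A B : Fin 3 → ℂ) (c : ℂ) (w p : GF 3) (D E : Fin 3 → GF 3) :
    I1 A B c w p D E = I2 A B c w p D E + NT A B c w p D E := by
  simp only [I1, I2, NT, n1, n2, n3, ginner, sumF, Fin.sum_univ_three, dstarPair, star2_0, star2_1,
    star2_2, oneG_c0, oneG_c1, oneG_c2, oneG_ce, oneG_c01, oneG_c02, oneG_c12, oneG_c012,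
    Pi.add_apply, Pi.sub_apply, Pi.neg_apply, Pi.smul_apply, smul_eq_mul,
    alt_e, alt_0, alt_1, alt_2, alt_01, alt_02, alt_12, alt_012,
    Pf_e, Pf_0, Pf_1, Pf_2, Pf_01, Pf_02, Pf_12, Pf_012,
    P0t_e, P0t_0, P0t_1, P0t_2, P0t_01, P0t_02, P0t_12, P0t_012,
    gd_e, gd_0, gd_1, gd_2, gd_01, gd_02, gd_12, gd_012,
    gdel_e, gdel_0, gdel_1, gdel_2, gdel_01, gdel_02, gdel_12, gdel_012,
    wedge_e, wedge_0, wedge_1, wedge_2, wedge_01, wedge_02, wedge_12, wedge_012,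
    vee_e, vee_0, vee_1, vee_2, vee_01, vee_02, vee_12, vee_012]
  simp only [proj_e, proj_0, proj_1, proj_2, proj_01, proj_02, proj_12, proj_012]
  norm_num only [if_true, if_false]
  ring

end

section

namespace Coeffs
variable (C : Coeffs)

lemma γ_slit (x : Pt 3) : C.γ x ∈ Complex.slitPlane := by
  left
  have h1 := C.hεge x
  have h2 := C.hε₀
  have : (C.γ x).re = C.εf x := by
    simp only [γ]
    rw [show Complex.I * (C.σf x : ℂ) / (C.ω : ℂ) = ((C.σf x / C.ω : ℝ) : ℂ) * Complex.I by
      push_cast; ring]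
    simp
  rw [this]; linarith

lemma μ_slit (x : Pt 3) : (C.μf x : ℂ) ∈ Complex.slitPlane := by
  left
  have h1 := C.hμge x
  have h2 := C.hμ₀
  simp; linarith

lemma γC1 : ContDiff ℝ 1 C.γ := by
  have h1 : ContDiff ℝ 1 fun x => (C.εf x : ℂ) := Complex.ofRealCLM.contDiff.comp C.hεC1
  have h2 : ContDiff ℝ 1 fun x => (C.σf x : ℂ) := Complex.ofRealCLM.contDiff.comp C.hσC1
  exact h1.add ((contDiff_const.mul h2).div_const _)

lemma log_C1 {f : Pt 3 → ℂ} (hf : ContDiff ℝ 1 f) (hs : ∀ x, f x ∈ Complex.slitPlane) :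
    ContDiff ℝ 1 fun x => Complex.log (f x) := by
  rw [contDiff_iff_contDiffAt]
  intro x
  exact ((Complex.contDiffAt_log (hs x)).restrict_scalars ℝ).comp x hf.contDiffAt

lemma aC1 : ContDiff ℝ 1 C.a := contDiff_const.mul (log_C1 C.γC1 C.γ_slit)

lemma bC1 : ContDiff ℝ 1 C.b :=
  contDiff_const.mul (log_C1 (Complex.ofRealCLM.contDiff.comp C.hμC1) C.μ_slit)

lemma exp_C1 {f : Pt 3 → ℂ} (hf : ContDiff ℝ 1 f) : ContDiff ℝ 1 fun x => Complex.exp (f x) :=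
  hf.cexp

lemma c0C1 : ContDiff ℝ 1 C.c0 :=
  (contDiff_const.mul (exp_C1 C.aC1)).mul (exp_C1 C.bC1)

lemma c0_sq (x : Pt 3) : C.c0 x * C.c0 x = -((C.ω : ℂ) ^ 2 * (C.γ x * (C.μf x : ℂ))) := by
  have h1 : C.sg x * C.sg x = C.γ x := by
    simp only [sg, a]
    rw [← Complex.exp_add]
    rw [show ∀ z : ℂ, 1 / 2 * z + 1 / 2 * z = z by intro z; ring]
    exact Complex.exp_log (Complex.slitPlane_ne_zero (C.γ_slit x))
  have h2 : C.sm x * C.sm x = (C.μf x : ℂ) := by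
    simp only [sm, b]
    rw [← Complex.exp_add]
    rw [show ∀ z : ℂ, 1 / 2 * z + 1 / 2 * z = z by intro z; ring]
    exact Complex.exp_log (Complex.slitPlane_ne_zero (C.μ_slit x))
  rw [← h1, ← h2]
  simp only [c0]
  linear_combination ((C.ω : ℂ) ^ 2 * C.sg x ^ 2 * C.sm x ^ 2) * Complex.I_mul_I

lemma pd_exp {f : Pt 3 → ℂ} (hf : ContDiff ℝ 1 f) (j : Fin 3) (x : Pt 3) :
    pd j (fun x => Complex.exp (f x)) x = Complex.exp (f x) * pd j f x := by
  unfold pd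
  rw [((hf.differentiable (by simp)) x).hasFDerivAt.cexp.fderiv]
  simp

lemma pd_sgm (j : Fin 3) (x : Pt 3) : Complex.I * (C.ω : ℂ) * pd j (fun y => C.sg y * C.sm y) x
    = C.c0 x * (pd j C.a x + pd j C.b x) := by
  rw [pd_mul (f := C.sg) (g := C.sm) ((exp_C1 C.aC1).differentiable (by simp)) ((exp_C1 C.bC1).differentiable (by simp))]
  have h1 : pd j C.sg x = C.sg x * pd j C.a x := pd_exp C.aC1 j x
  have h2 : pd j C.sm x = C.sm x * pd j C.b x := pd_exp C.bC1 j x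
  rw [h1, h2]
  simp only [c0]; ring

lemma pd_c0 (j : Fin 3) (x : Pt 3) : pd j C.c0 x = C.c0 x * (pd j C.a x + pd j C.b x) := by
  rw [← pd_sgm]
  have : C.c0 = fun x => Complex.I * (C.ω : ℂ) * (C.sg x * C.sm x) := by
    ext x; simp only [c0]; ring
  rw [this]
  exact pd_const_mul (((exp_C1 C.aC1).mul (exp_C1 C.bC1)).differentiable (by simp)) _ j x

end Coeffs

end

section

/-- classes of functions closed under sums and multiplication by continuous functions -/
structure CMod (M : (Pt 3 → ℂ) → Prop) : Prop where
  zero : M fun _ => 0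
  add : ∀ {f g}, M f → M g → M fun x => f x + g x
  cmul : ∀ {c f}, Continuous c → M f → M fun x => c x * f x

/-- continuous and compactly supported -/
def CC (f : Pt 3 → ℂ) : Prop := Continuous f ∧ HasCompactSupport f

/-- integrable against all continuous functions -/
def CInt (f : Pt 3 → ℂ) : Prop :=
  ∀ c : Pt 3 → ℂ, Continuous c → Integrable (fun x => c x * f x) volume

lemma CInt.int {f : Pt 3 → ℂ} (h : CInt f) : Integrable f volume := by
  simpa using h (fun _ => 1) continuous_const

lemma cmod_L2 : CMod L2loc := ⟨L2loc.zero, fun h1 h2 => h1.add h2, fun hc h => h.cmul hc⟩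

lemma cmod_CC : CMod CC :=
  ⟨⟨continuous_const, HasCompactSupport.zero⟩, fun h1 h2 => ⟨h1.1.add h2.1, h1.2.add h2.2⟩,
    fun hc h => ⟨hc.mul h.1, h.2.mul_left⟩⟩

lemma cmod_CInt : CMod CInt := by
  refine ⟨fun c _ => by simp, fun {f g} h1 h2 c hc => ?_, fun {c f} hc h c' hc' => ?_⟩
  · simp only [mul_add]
    exact (h1 c hc).add (h2 c hc)
  · simpa [mul_assoc] using h (fun x => c' x * c x) (hc'.mul hc)

lemma cint_mul {f φ : Pt 3 → ℂ} (hf : L2loc f) (hφ : CC φ) : CInt fun x => f x * φ x := by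
  intro c hc
  have := locInt_mul_cc hf.locInt (hc.mul hφ.1) hφ.2.mul_left
  refine this.congr (Filter.Eventually.of_forall fun x => ?_)
  show f x * (c x * φ x) = c x * (f x * φ x)
  ring

namespace CMod

lemma kmul {M : (Pt 3 → ℂ) → Prop} (hM : CMod M) (k : ℂ) {f} (h : M f) :
    M fun x => k * f x := hM.cmul continuous_const h

lemma neg {M : (Pt 3 → ℂ) → Prop} (hM : CMod M) {f} (h : M f) : M fun x => -f x := by
  simpa using hM.kmul (-1) h

lemma sub {M : (Pt 3 → ℂ) → Prop} (hM : CMod M) {f g} (h : M f) (h' : M g) :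
    M fun x => f x - g x := by
  simpa [sub_eq_add_neg] using hM.add h (hM.neg h')

lemma sum {M : (Pt 3 → ℂ) → Prop} (hM : CMod M) {ι : Type*} (s : Finset ι)
    {f : ι → Pt 3 → ℂ} (h : ∀ i ∈ s, M (f i)) :
    M (fun x => ∑ i ∈ s, f i x) := by
  classical
  induction s using Finset.induction_on with
  | empty => simpa using hM.zero
  | insert a s ha ih =>
    simp only [Finset.sum_insert ha]
    exact hM.add (h a (by simp)) (ih fun i hi => h i (by simp [hi]))

end CMod

/-- forms with components in a class -/
def FM (M : (Pt 3 → ℂ) → Prop) (u : Form 3) : Prop := ∀ S, M fun x => u x S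

namespace FM

lemma add {M : (Pt 3 → ℂ) → Prop} (hM : CMod M) {u v : Form 3} (hu : FM M u) (hv : FM M v) :
    FM M fun x => u x + v x := fun S => hM.add (hu S) (hv S)

lemma sub {M : (Pt 3 → ℂ) → Prop} (hM : CMod M) {u v : Form 3} (hu : FM M u) (hv : FM M v) :
    FM M fun x => u x - v x := fun S => hM.sub (hu S) (hv S)

lemma neg {M : (Pt 3 → ℂ) → Prop} (hM : CMod M) {u : Form 3} (hu : FM M u) :
    FM M fun x => -u x := fun S => hM.neg (hu S)

lemma smul {M : (Pt 3 → ℂ) → Prop} (hM : CMod M) {u : Form 3} {c : Pt 3 → ℂ}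
    (hc : Continuous c) (hu : FM M u) :
    FM M fun x => c x • u x := fun S => hM.cmul hc (hu S)

lemma proj {M : (Pt 3 → ℂ) → Prop} (hM : CMod M) {u : Form 3} (l : ℕ) (hu : FM M u) :
    FM M fun x => proj l (u x) := by
  intro S
  simp only [EMPaper.proj]
  by_cases h : S.card = l
  · simpa [h] using hu S
  · simpa [h] using hM.zero

lemma alt {M : (Pt 3 → ℂ) → Prop} (hM : CMod M) {u : Form 3} (hu : FM M u) :
    FM M fun x => altSign (u x) := fun S => hM.kmul _ (hu S)

lemma wedge {M : (Pt 3 → ℂ) → Prop} (hM : CMod M) {A u : Form 3} (hA : FM Continuous A)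
    (hu : FM M u) : FM M fun x => wedge (A x) (u x) := fun _ =>
  hM.sum _ fun I _ => hM.cmul (continuous_const.mul (hA I)) (hu _)

lemma vee {M : (Pt 3 → ℂ) → Prop} (hM : CMod M) {A u : Form 3} (hA : FM Continuous A)
    (hu : FM M u) : FM M fun x => vee (A x) (u x) := fun _ =>
  hM.sum _ fun I _ => hM.cmul (continuous_const.mul (hA I)) (hu _)

lemma gd {M : (Pt 3 → ℂ) → Prop} (hM : CMod M) {D : Fin 3 → Form 3}
    (hu : ∀ j, FM M (D j)) : FM M fun x => gd fun j => D j x := fun S =>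
  hM.sum _ fun j _ => FM.wedge hM (A := fun _ => dxe j) (fun _ => continuous_const) (hu j) S

lemma gdel {M : (Pt 3 → ℂ) → Prop} (hM : CMod M) {D : Fin 3 → Form 3}
    (hu : ∀ j, FM M (D j)) : FM M fun x => gdel fun j => D j x := fun S =>
  hM.kmul _ (hM.sum _ fun j _ =>
    FM.vee hM (A := fun _ => dxe j) (fun _ => continuous_const) (hu j) S)

lemma oneG {A : Fin 3 → Pt 3 → ℂ} (hA : ∀ j, Continuous (A j)) :
    FM Continuous fun x => oneG fun j => A j x := by
  intro S
  refine continuous_finsetSum _ fun j _ => ?_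
  by_cases h : S = {j}
  · simpa [h] using hA j
  · simpa [h] using continuous_const

lemma ginner {u φ : Form 3} (hu : FM L2loc u) (hφ : FM CC φ) :
    CInt fun x => ginner (u x) (φ x) :=
  cmod_CInt.sum _ fun S _ => cint_mul (hu S) (hφ S)

lemma P0 {M : (Pt 3 → ℂ) → Prop} (hM : CMod M) {A B v : Form 3} {c : Pt 3 → ℂ}
    (hA : FM Continuous A) (hB : FM Continuous B) (hc : Continuous c) (hv : FM M v) :
    FM M fun x => P0 (A x) (B x) (c x) (v x) :=
  ((((FM.wedge hM hA (hv.proj hM 1)).add hM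
    (FM.vee hM hA ((hv.proj hM 1).add hM (hv.proj hM 3)))).add hM
    (FM.wedge hM hB ((hv.proj hM 0).add hM (hv.proj hM 2)))).sub hM
    (FM.vee hM hB (hv.proj hM 2))).add hM (hv.smul hM hc)

lemma P0t {M : (Pt 3 → ℂ) → Prop} (hM : CMod M) {A B v : Form 3} {c : Pt 3 → ℂ}
    (hA : FM Continuous A) (hB : FM Continuous B) (hc : Continuous c) (hv : FM M v) :
    FM M fun x => P0t (A x) (B x) (c x) (v x) := FM.P0 hM hB hA hc hv

lemma Pfull {M : (Pt 3 → ℂ) → Prop} (hM : CMod M) {A B v : Form 3} {D : Fin 3 → Form 3}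
    {c : Pt 3 → ℂ} (hA : FM Continuous A) (hB : FM Continuous B) (hc : Continuous c)
    (hD : ∀ j, FM M (D j)) (hv : FM M v) :
    FM M fun x => Pfull (A x) (B x) (c x) (fun j => D j x) (v x) :=
  (((FM.gd hM (D := fun j x => altSign (D j x)) fun j => (hD j).alt hM).add hM
    (FM.gdel hM (D := fun j x => altSign (D j x)) fun j => (hD j).alt hM))).add hM
    (FM.P0 hM hA hB hc hv)

end FM

lemma cint_dstar {c : Fin 3 → Pt 3 → ℂ} {u v : Fin 3 → Pt 3 → ℂ}
    {du dv : Fin 3 → Fin 3 → Pt 3 → ℂ} (hc : ∀ k, Continuous (c k)) (hu : ∀ k, L2loc (u k))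
    (hv : ∀ k, CC (v k)) (hdu : ∀ j k, L2loc (du j k)) (hdv : ∀ j k, CC (dv j k)) :
    CInt fun x => dstarPair (fun k => c k x) (fun k => u k x) (fun k => v k x)
      (fun j k => du j k x) (fun j k => dv j k x) := by
  refine cmod_CInt.sum _ fun k _ => cmod_CInt.cmul (hc k) (cmod_CInt.neg (cmod_CInt.sum _
    fun j _ => ?_))
  exact cmod_CInt.add (cmod_CInt.add (cmod_CInt.add (cint_mul (hdu j j) (hv k))
    (cint_mul (hu j) (hdv j k))) (cint_mul (hdu j k) (hv j))) (cint_mul (hu k) (hdv j j))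

lemma FM.star2 {M : (Pt 3 → ℂ) → Prop} (hM : CMod M) {u : Form 3} (hu : FM M u) (k : Fin 3) :
    M fun x => star2 (u x) k := by
  fin_cases k
  · exact hu {1, 2}
  · exact hM.neg (hu {0, 2})
  · exact hu {0, 1}

end

section

/-- integrable with zero integral -/
def Null (f : Pt 3 → ℂ) : Prop := Integrable f volume ∧ ∫ x, f x = 0

lemma Null.add {f g : Pt 3 → ℂ} (hf : Null f) (hg : Null g) : Null fun x => f x + g x :=
  ⟨hf.1.add hg.1, by rw [integral_add hf.1 hg.1, hf.2, hg.2, add_zero]⟩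

lemma Null.sub {f g : Pt 3 → ℂ} (hf : Null f) (hg : Null g) : Null fun x => f x - g x :=
  ⟨hf.1.sub hg.1, by rw [integral_sub hf.1 hg.1, hf.2, hg.2, sub_zero]⟩

lemma null_n1 {w : Form 3} {Dw : Fin 3 → Form 3} (hw : H1locWith w Dw) {φ : Form 3}
    (hφ : TestForm φ) (j k : Fin 3) (S T : Finset (Fin 3)) :
    Null fun x => n1 (fun j => Dw j x) (fun j => Dcl φ j x) j k S T := by
  have li := fun j => (hw.2.2 j S).locInt
  have i1 : Integrable (fun x => Dw k x S * Dcl φ j x T) volume :=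
    locInt_mul_cc (li k) ((hφ T).pd j).cont ((hφ T).pd j).2
  have i2 : Integrable (fun x => Dw j x S * Dcl φ k x T) volume :=
    locInt_mul_cc (li j) ((hφ T).pd k).cont ((hφ T).pd k).2
  refine ⟨i1.sub i2, ?_⟩
  simp only [n1]
  rw [integral_sub i1 i2, sub_eq_zero]
  exact null1 (li j) (li k) (hw.2.1 j S) (hw.2.1 k S) (hφ T)

lemma null_n3 {w : Form 3} {Dw : Fin 3 → Form 3} (hw : H1locWith w Dw) {φ : Form 3}
    (hφ : TestForm φ) {a : Pt 3 → ℂ} (ha : ContDiff ℝ 1 a) (j k : Fin 3) (S T : Finset (Fin 3)) :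
    Null fun x => n3 (fun j => pd j a x) (w x) (φ x) (fun j => Dw j x)
      (fun j => Dcl φ j x) j k S T := by
  have hc : ∀ j, CC fun x => Dcl φ j x T := fun j => ⟨((hφ T).pd j).cont, ((hφ T).pd j).2⟩
  have h0 : CC fun x => φ x T := ⟨(hφ T).cont, (hφ T).2⟩
  have i1 : ∀ j k, Integrable (fun x => pd j a x * (w x S * Dcl φ k x T + Dw k x S * φ x T)) volume :=
    fun j k => (cmod_CInt.cmul (pd_continuous ha j)
      (cmod_CInt.add (cint_mul (hw.1 S) (hc k)) (cint_mul (hw.2.2 k S) h0))).int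
  refine ⟨(i1 j k).sub (i1 k j), ?_⟩
  simp only [n3]
  rw [integral_sub (i1 j k) (i1 k j), sub_eq_zero]
  exact null3 (hw.1 S).locInt (hw.2.2 j S).locInt (hw.2.2 k S).locInt (hw.2.1 j S) (hw.2.1 k S)
    (hφ T) ha

lemma null_n2 (C : Coeffs) {w : Form 3} {Dw : Fin 3 → Form 3} (hw : H1locWith w Dw) {φ : Form 3}
    (hφ : TestForm φ) (j : Fin 3) (S T : Finset (Fin 3)) :
    Null fun x => n2 (C.c0 x) (fun j => pd j C.a x) (fun j => pd j C.b x) (w x) (φ x)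
      (fun j => Dw j x) (fun j => Dcl φ j x) j S T := by
  have hc : CC fun x => Dcl φ j x T := ⟨((hφ T).pd j).cont, ((hφ T).pd j).2⟩
  have h0 : CC fun x => φ x T := ⟨(hφ T).cont, (hφ T).2⟩
  have cc := C.c0C1.continuous
  have ca := pd_continuous C.aC1 j
  have cb := pd_continuous C.bC1 j
  constructor
  · have := (cmod_CInt.add (cmod_CInt.add (cmod_CInt.cmul cc (cint_mul (hw.1 S) hc))
      (cmod_CInt.cmul cc (cint_mul (hw.2.2 j S) h0)))
      (cmod_CInt.cmul (cc.mul (ca.add cb)) (cint_mul (hw.1 S) h0))).int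
    refine this.congr (Filter.Eventually.of_forall fun x => ?_)
    simp only [n2, Pi.mul_apply, Pi.add_apply]; ring
  · have := null2 (hw.1 S).locInt (hw.2.2 j S).locInt (hw.2.1 j S) (hφ T) C.c0C1
    rw [← this]
    congr 1; ext x
    simp only [n2, C.pd_c0]
    rfl

lemma null_NT (C : Coeffs) {w : Form 3} {Dw : Fin 3 → Form 3} (hw : H1locWith w Dw) {φ : Form 3}
    (hφ : TestForm φ) :
    Null fun x => NT (fun j => pd j C.a x) (fun j => pd j C.b x) (C.c0 x) (w x) (φ x)
      (fun j => Dw j x) (fun j => Dcl φ j x) := by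
  unfold NT
  have h1 := null_n1 hw hφ
  have h2 := null_n2 C hw hφ
  have h3 := null_n3 hw hφ C.aC1
  have h4 := null_n3 hw hφ C.bC1
  refine Null.sub ?_ ?_
  all_goals
    repeat' first
      | with_reducible exact h1 _ _ _ _
      | with_reducible exact h2 _ _ _
      | with_reducible exact h3 _ _ _ _
      | with_reducible exact h4 _ _ _ _
      | with_reducible refine Null.add ?_ ?_

lemma Q2_eq (C : Coeffs) (x : Pt 3) (w p : GF 3) :
    ginner ((-(2 * Complex.I * (C.ω : ℂ))) • vee (C.dsgm x) (proj 2 w)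
      + (2 * Complex.I * (C.ω : ℂ)) • wedge (C.dsgm x) (proj 1 w)) p
    = ginner ((-2 : ℂ) • vee (oneG fun j => C.c0 x * (pd j C.a x + pd j C.b x)) (proj 2 w)
      + (2 : ℂ) • wedge (oneG fun j => C.c0 x * (pd j C.a x + pd j C.b x)) (proj 1 w)) p := by
  have h : C.dsgm x = oneG fun j => pd j (fun y => C.sg y * C.sm y) x := rfl
  rw [h]
  congr 1
  ext S
  simp only [Pi.add_apply, Pi.smul_apply, smul_eq_mul, wedge_one, vee_one, mul_sum, ← C.pd_sgm]
  congr 1 <;> refine sum_congr rfl fun j _ => ?_ <;> ring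

section

lemma weak_int (C : Coeffs) (w : Form 3) (Dw : Fin 3 → Form 3)
    (hw : H1locWith w Dw)
    (heq : ∀ φ : Form 3, TestForm φ →
      (∫ x, ginner (gdel fun j => Dw j x) (gdel fun j => Dcl φ j x)
          + ginner (gd fun j => Dw j x) (gd fun j => Dcl φ j x)
          - (C.ω : ℂ) ^ 2 * ((C.ε₀ * C.μ₀ : ℝ) : ℂ) * ginner (w x) (φ x))
        + Qtpair C w Dw φ = 0) :
    IsWeakSolPt C
      (fun x => Pfull (C.da x) (C.db x) (C.c0 x) (fun j => Dw j x) (w x)) := by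
  intro φ hφ
  have e := heq φ hφ
  have L := cmod_L2
  have K := cmod_CC
  have I := cmod_CInt
  have Fw : FM L2loc w := hw.1
  have FD : ∀ j, FM L2loc (Dw j) := hw.2.2
  have Fp : FM CC φ := fun S => ⟨(hφ S).cont, (hφ S).2⟩
  have FE : ∀ j, FM CC (Dcl φ j) := fun j S => ⟨((hφ S).pd j).cont, ((hφ S).pd j).2⟩
  have ca := fun j => pd_continuous C.aC1 j
  have cb := fun j => pd_continuous C.bC1 j
  have cc := C.c0C1.continuous
  have cA : FM Continuous C.da := FM.oneG ca
  have cB : FM Continuous C.db := FM.oneG cb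
  have ccs : ∀ j, Continuous fun x => C.c0 x * (pd j C.a x + pd j C.b x) := fun j =>
    cc.mul ((ca j).add (cb j))
  have cS : FM Continuous fun x => oneG fun j => C.c0 x * (pd j C.a x + pd j C.b x) := FM.oneG ccs
  have cγ := C.γC1.continuous
  have cμ : Continuous fun x => (C.μf x : ℂ) := Complex.continuous_ofReal.comp C.hμC1.continuous
  have Fv := FM.Pfull L cA cB cc FD Fw
  have FEv : FM CC fun x => (gd fun j => Dcl φ j x) + gdel fun j => Dcl φ j x :=
    (FM.gd K FE).add K (FM.gdel K FE)
  -- the left-hand side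
  have J1 := (FM.ginner ((Fv.alt L).neg L) FEv).int
  have J2 := (FM.ginner (FM.P0t L cA cB cc Fv) Fp).int
  rw [← integral_add J1 J2]
  -- the hypothesis
  have T1 : CInt fun x => ginner (gdel fun j => Dw j x) (gdel fun j => Dcl φ j x)
          + ginner (gd fun j => Dw j x) (gd fun j => Dcl φ j x)
          - (C.ω : ℂ) ^ 2 * ((C.ε₀ * C.μ₀ : ℝ) : ℂ) * ginner (w x) (φ x) :=
    I.sub (I.add (FM.ginner (FM.gdel L FD) (FM.gdel K FE)) (FM.ginner (FM.gd L FD) (FM.gd K FE)))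
      (I.kmul _ (FM.ginner Fw Fp))
  have Q1 : CInt fun x => (C.ω : ℂ) ^ 2 * (C.γ x * (C.μf x : ℂ) - ((C.ε₀ * C.μ₀ : ℝ) : ℂ))
      * ginner (w x) (φ x) :=
    I.cmul (continuous_const.mul ((cγ.mul cμ).sub continuous_const)) (FM.ginner Fw Fp)
  have Q2 : CInt fun x => ginner ((-2 : ℂ) •
        vee (oneG fun j => C.c0 x * (pd j C.a x + pd j C.b x)) (proj 2 (w x))
      + (2 : ℂ) • wedge (oneG fun j => C.c0 x * (pd j C.a x + pd j C.b x)) (proj 1 (w x))) (φ x) :=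
    FM.ginner (((FM.vee L cS (Fw.proj L 2)).smul L continuous_const).add L
      ((FM.wedge L cS (Fw.proj L 1)).smul L continuous_const)) Fp
  have cg : ∀ {A : Form 3}, FM Continuous A → Continuous fun x => ginner (A x) (A x) := fun hA =>
    continuous_finsetSum _ fun S _ => (hA S).mul (hA S)
  have Q3 : CInt fun x => ginner (C.db x) (C.db x)
        * ginner (proj 0 (w x) + proj 2 (w x)) (proj 0 (φ x) + proj 2 (φ x))
      + ginner (C.da x) (C.da x)
        * ginner (proj 1 (w x) + proj 3 (w x)) (proj 1 (φ x) + proj 3 (φ x)) :=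
    I.add (I.cmul (cg cB) (FM.ginner ((Fw.proj L 0).add L (Fw.proj L 2))
        ((Fp.proj K 0).add K (Fp.proj K 2))))
      (I.cmul (cg cA) (FM.ginner ((Fw.proj L 1).add L (Fw.proj L 3))
        ((Fp.proj K 1).add K (Fp.proj K 3))))
  have Q4 : CInt fun x => (∑ j, pd j C.b x *
        (ginner (proj 0 (Dw j x) - proj 2 (Dw j x)) (proj 0 (φ x) + proj 2 (φ x))
          + ginner (proj 0 (w x) - proj 2 (w x)) (proj 0 (Dcl φ j x) + proj 2 (Dcl φ j x))))
      + ∑ j, pd j C.a x *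
        (ginner (proj 3 (Dw j x) - proj 1 (Dw j x)) (proj 1 (φ x) + proj 3 (φ x))
          + ginner (proj 3 (w x) - proj 1 (w x)) (proj 1 (Dcl φ j x) + proj 3 (Dcl φ j x))) :=
    I.add
      (I.sum _ fun j _ => I.cmul (cb j) (I.add
        (FM.ginner (((FD j).proj L 0).sub L ((FD j).proj L 2)) ((Fp.proj K 0).add K (Fp.proj K 2)))
        (FM.ginner ((Fw.proj L 0).sub L (Fw.proj L 2))
          (((FE j).proj K 0).add K ((FE j).proj K 2)))))
      (I.sum _ fun j _ => I.cmul (ca j) (I.add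
        (FM.ginner (((FD j).proj L 3).sub L ((FD j).proj L 1)) ((Fp.proj K 1).add K (Fp.proj K 3)))
        (FM.ginner ((Fw.proj L 3).sub L (Fw.proj L 1))
          (((FE j).proj K 1).add K ((FE j).proj K 3)))))
  have Q5 : CInt fun x => dstarPair (fun k => pd k C.a x) (fun j => w x {j}) (fun j => φ x {j})
      (fun j k => Dw j x {k}) (fun j k => Dcl φ j x {k}) :=
    cint_dstar ca (fun k => Fw {k}) (fun k => Fp {k}) (fun j k => FD j {k}) (fun j k => FE j {k})
  have Q6 : CInt fun x => dstarPair (fun k => pd k C.b x) (star2 (w x)) (star2 (φ x))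
      (fun j k => star2 (Dw j x) k) (fun j k => star2 (Dcl φ j x) k) :=
    cint_dstar cb (fun k => Fw.star2 L k) (fun k => Fp.star2 K k) (fun j k => (FD j).star2 L k)
      (fun j k => (FE j).star2 K k)
  unfold Qtpair at e
  simp only [Q2_eq] at e
  have i1 := integral_sub T1.int Q1.int
  have s1 := I.sub T1 Q1
  have i2 := integral_add s1.int Q2.int
  have s2 := I.add s1 Q2
  have i3 := integral_add s2.int Q3.int
  have s3 := I.add s2 Q3
  have i4 := integral_add s3.int Q4.int
  have s4 := I.add s3 Q4
  have i5 := integral_sub s4.int Q5.int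
  have s5 := I.sub s4 Q5
  have i6 := integral_sub s5.int Q6.int
  have s6 := I.sub s5 Q6
  rw [i5, i4, i3, i2, i1] at i6
  have N := null_NT C hw hφ
  have i7 := integral_add s6.int N.1
  rw [i6, N.2] at i7
  refine Eq.trans ?_ (i7.trans ?_)
  · congr 1; ext x
    refine (alg_id (fun j => pd j C.a x) (fun j => pd j C.b x) (C.c0 x) (w x) (φ x)
      (fun j => Dw j x) (fun j => Dcl φ j x)).trans ?_
    congr 1
    simp only [I2, C.c0_sq]
    have h1 : C.da x = oneG fun j => pd j C.a x := rfl
    have h2 : C.db x = oneG fun j => pd j C.b x := rfl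
    simp only [h1, h2]
    ring
  · linear_combination e

end

end

section

/-- coefficients of `(d + δ)(θ e_S)` -/
def kap (S : Finset (Fin 3)) (k : Fin 3) (T : Finset (Fin 3)) : ℂ :=
  gd (fun j => if j = k then Pi.single S 1 else 0) T
    + gdel (fun j => if j = k then Pi.single S 1 else 0) T

set_option maxHeartbeats 2000000 in
lemma kap_sq (S : Finset (Fin 3)) (H : Fin 3 → Fin 3 → ℂ) (hH : ∀ i k, H i k = H k i)
    (T : Finset (Fin 3)) :
    gd (fun i T => ∑ k, kap S k T * H i k) T + gdel (fun i T => ∑ k, kap S k T * H i k) T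
      = if T = S then -∑ k, H k k else 0 := by
  have h1 := hH 1 0
  have h2 := hH 2 0
  have h3 := hH 2 1
  revert T
  revert S
  apply casesF <;> apply casesF <;>
  · simp only [gd_e, gd_0, gd_1, gd_2, gd_01, gd_02, gd_12, gd_012, gdel_e, gdel_0, gdel_1, gdel_2,
      gdel_01, gdel_02, gdel_12, gdel_012, kap, Fin.sum_univ_three, h1, h2, h3, Fin.isValue,
      Pi.single_apply]
    simp +decide [Pi.single_apply]
    try ring

lemma lap_alg (S : Finset (Fin 3)) (v : GF 3) (H : Fin 3 → Fin 3 → ℂ) (hH : ∀ i k, H i k = H k i) :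
    ginner (-altSign v) ((gd fun i T => ∑ k, kap S k T * H i k)
      + gdel fun i T => ∑ k, kap S k T * H i k)
    = (-1) ^ S.card * v S * ∑ k, H k k := by
  unfold ginner
  simp only [Pi.add_apply, kap_sq S H hH, Pi.neg_apply, altSign]
  simp

lemma reg_fin (C : Coeffs) (v : Form 3) (hv : FM L2loc v) (h : IsWeakSolPt C v)
    (S : Finset (Fin 3)) (j : Fin 3) : ∃ g, HasWeakPD j (fun x => v x S) g ∧ L2loc g := by
  have cA : FM Continuous C.da := FM.oneG fun j => pd_continuous C.aC1 j
  have cB : FM Continuous C.db := FM.oneG fun j => pd_continuous C.bC1 j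
  have FP := FM.P0t cmod_L2 cA cB C.c0C1.continuous hv
  have hF : ∀ k, L2loc fun x => ∑ T : Finset (Fin 3), (-(-1 : ℂ) ^ S.card * kap S k T) *
      P0t (C.da x) (C.db x) (C.c0 x) (v x) T := fun k =>
    cmod_L2.sum _ fun T _ => cmod_L2.kmul _ (FP T)
  refine reg_loc (fun x => v x S) _ (hv S) hF (fun θ hθ => ?_) j
  have tk := fun k => hθ.pd k
  have hφ : TestForm fun x T => ∑ k, kap S k T * pd k θ x := by
    intro T
    refine ⟨ContDiff.sum fun k _ => contDiff_const.mul (tk k).1, ?_⟩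
    exact (cmod_CC.sum (f := fun k x => kap S k T * pd k θ x) univ
      fun k _ => cmod_CC.kmul _ ⟨(tk k).cont, (tk k).2⟩).2
  have e := h _ hφ
  have hD : ∀ i x, Dcl (fun x T => ∑ k, kap S k T * pd k θ x) i x
      = fun T => ∑ k, kap S k T * pd i (pd k θ) x := by
    intro i x
    ext T
    have d := fun k => smooth_diff (tk k).1
    simp only [Dcl, Fin.sum_univ_three]
    rw [pd_add (((d 0).const_mul _).fun_add ((d 1).const_mul _)) ((d 2).const_mul _),
      pd_add ((d 0).const_mul _) ((d 1).const_mul _), pd_const_mul (d 0), pd_const_mul (d 1),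
      pd_const_mul (d 2)]
  simp only [hD] at e
  have e1 : ∀ x, ginner (-altSign (v x)) ((gd fun i T => ∑ k, kap S k T * pd i (pd k θ) x)
      + gdel fun i T => ∑ k, kap S k T * pd i (pd k θ) x)
      = (-1) ^ S.card * (v x S * ∑ k, pd k (pd k θ) x) := fun x =>
    (lap_alg S (v x) (fun i k => pd i (pd k θ) x) fun i k => pd_comm hθ.1 i k x).trans
      (mul_assoc _ _ _)
  simp only [e1] at e
  rw [integral_const_mul] at e
  have sg : ((-1 : ℂ) ^ S.card) * (-1) ^ S.card = 1 := by
    rw [← mul_pow]; simp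
  have i1 : ∀ k ∈ (univ : Finset (Fin 3)), Integrable (fun x => (∑ T : Finset (Fin 3),
      (-(-1 : ℂ) ^ S.card * kap S k T) * P0t (C.da x) (C.db x) (C.c0 x) (v x) T) * pd k θ x)
      volume := fun k _ => (cint_mul (hF k) ⟨(tk k).cont, (tk k).2⟩).int
  rw [← integral_finsetSum _ i1]
  have e2 : ∀ x, (∑ k, (∑ T : Finset (Fin 3),
      (-(-1 : ℂ) ^ S.card * kap S k T) * P0t (C.da x) (C.db x) (C.c0 x) (v x) T) * pd k θ x)
      = -(-1 : ℂ) ^ S.card * ginner (P0t (C.da x) (C.db x) (C.c0 x) (v x))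
        (fun T => ∑ k, kap S k T * pd k θ x) := by
    intro x
    simp only [ginner, Fin.sum_univ_three, mul_sum, sum_mul, ← sum_add_distrib]
    refine sum_congr rfl fun T _ => ?_
    ring
  simp only [e2]
  rw [integral_const_mul]
  linear_combination ((-1 : ℂ) ^ S.card) * e - (∫ x, v x S * ∑ k, pd k (pd k θ) x) * sg

end

/-- Proposition 2.2.  If the graded form `w`, with components in
`H¹_loc(ℝ³)`, satisfies
`∫ [⟨δw,δφ⟩ + ⟨dw,dφ⟩ − ω²ε₀μ₀⟨w,φ⟩] dx + ⟨Q̃(γ,μ,ω)w, φ⟩ = 0`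
for every smooth compactly supported graded form `φ`, then `v := P(γ,μ,ω)w` is a weak
solution of `P(γ,μ,ω)^t v = 0` on `ℝ³` and every component of `v` belongs to `H¹_loc`. -/
theorem statement1 (C : Coeffs) (w : Form 3) (Dw : Fin 3 → Form 3)
    (hw : H1locWith w Dw)
    (heq : ∀ φ : Form 3, TestForm φ →
      (∫ x, ginner (gdel fun j => Dw j x) (gdel fun j => Dcl φ j x)
          + ginner (gd fun j => Dw j x) (gd fun j => Dcl φ j x)
          - (C.ω : ℂ) ^ 2 * ((C.ε₀ * C.μ₀ : ℝ) : ℂ) * ginner (w x) (φ x))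
        + Qtpair C w Dw φ = 0) :
    IsWeakSolPt C
      (fun x => Pfull (C.da x) (C.db x) (C.c0 x) (fun j => Dw j x) (w x)) ∧
    ∀ S : Finset (Fin 3),
      L2loc (fun x => Pfull (C.da x) (C.db x) (C.c0 x) (fun j => Dw j x) (w x) S) ∧
      ∀ j : Fin 3, ∃ h : Pt 3 → ℂ,
        HasWeakPD j
          (fun x => Pfull (C.da x) (C.db x) (C.c0 x) (fun j' => Dw j' x) (w x) S) h ∧
        L2loc h := by
  have W := weak_int C w Dw hw heq
  have cA : FM Continuous C.da := FM.oneG fun j => pd_continuous C.aC1 j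
  have cB : FM Continuous C.db := FM.oneG fun j => pd_continuous C.bC1 j
  have Fv := FM.Pfull cmod_L2 cA cB C.c0C1.continuous (D := Dw) hw.2.2 hw.1
  exact ⟨W, fun S => ⟨Fv S, fun j => reg_fin C _ Fv W S j⟩⟩

end EMPaper
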